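/- arXiv:2601.02079 — 8 statements merged into one kernel-verified Lean document; each statement's English description precedes it below -/
import Mathlib

section
/- Let V, W ∈ (0,1). Then: (i) for every x ∈ ℝ, f^max_{VW}(x) ≤ (1+V)/(1−W), with equality if and only if x is an even multiple of π; (ii) for every x ∈ ℝ, f^max_{VW}(x) ≥ m, where m = (1−V)/(1−W) if V ≤ W and m = (1+V)/(1+W) if V ≥ W, with equality if and only if x is an odd multiple of π. In particular sup_{x∈ℝ} f^max_{VW}(x) = (1+V)/(1−W) and inf_{x∈ℝ} f^max_{VW}(x) = m. -/
/-- For parameters `V, W ∈ [0,1)`, the function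
`f_{VW}(α, x) = (1 + V·cos(x + α))/(1 − W·cos α)`. -/
noncomputable def fVW (V W α x : ℝ) : ℝ :=
    (1 + V * Real.cos (x + α)) / (1 - W * Real.cos α)

/-- `f^max_{VW}(x) = sup_{α ∈ ℝ} f_{VW}(α, x)`. -/
noncomputable def fVWmax (V W x : ℝ) : ℝ := ⨆ α : ℝ, fVW V W α x

theorem fVW_aux_den {W : ℝ} (hW : W ∈ Set.Ioo (0 : ℝ) 1) (α : ℝ) : 1 - W ≤ 1 - W * Real.cos α := by
  nlinarith [hW.1, Real.cos_le_one α]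

theorem fVW_aux_le {V W : ℝ} (hV : V ∈ Set.Ioo (0 : ℝ) 1) (hW : W ∈ Set.Ioo (0 : ℝ) 1) (α x : ℝ) :
    fVW V W α x ≤ (1 + V) / (1 - W) := by
  unfold fVW
  have h := fVW_aux_den hW α
  have h2 := hW.2
  have h3 := hV.1
  apply div_le_div₀ <;> nlinarith [Real.cos_le_one (x + α)]

theorem fVW_aux_bdd {V W : ℝ} (hV : V ∈ Set.Ioo (0 : ℝ) 1) (hW : W ∈ Set.Ioo (0 : ℝ) 1) (x : ℝ) :
    BddAbove (Set.range fun α => fVW V W α x) :=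
  ⟨_, by rintro _ ⟨α, rfl⟩; exact fVW_aux_le hV hW α x⟩

theorem fVW_aux_attain {V W : ℝ} (hW : W ∈ Set.Ioo (0 : ℝ) 1)
    (x : ℝ) : ∃ α, fVWmax V W x = fVW V W α x := by
  have hc : Continuous fun α => fVW V W α x := by
    unfold fVW
    refine Continuous.div (by fun_prop) (by fun_prop) fun α => ?_
    have := fVW_aux_den hW α
    have := hW.2
    linarith
  have hp : Function.Periodic (fun α => fVW V W α x) (2 * Real.pi) := by
    intro α
    simp only [fVW, ← add_assoc, Real.cos_add_two_pi]
  obtain ⟨a, -, ha⟩ := (isCompact_Icc (a := (0 : ℝ)) (b := 2 * Real.pi)).exists_isMaxOn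
    ⟨0, by simp [Real.pi_pos.le]⟩ hc.continuousOn
  have hub : ∀ α, fVW V W α x ≤ fVW V W a x := by
    intro α
    obtain ⟨y, hy, hy2⟩ := hp.exists_mem_Ico₀ Real.two_pi_pos α
    have h1 : fVW V W α x = fVW V W y x := hy2
    rw [h1]
    exact ha (Set.Ico_subset_Icc_self hy)
  refine ⟨a, le_antisymm (ciSup_le hub) ?_⟩
  exact le_ciSup (f := fun α => fVW V W α x) ⟨_, by rintro _ ⟨α, rfl⟩; exact hub α⟩ a

/-- For `V, W ∈ (0,1)`:
(i) `f^max_{VW}(x) ≤ (1+V)/(1−W)` with equality iff `x` is an even multiple of `π`;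
(ii) `f^max_{VW}(x) ≥ m` (`m = (1−V)/(1−W)` if `V ≤ W`, `m = (1+V)/(1+W)` if `V ≥ W`),
with equality iff `x` is an odd multiple of `π`.  In particular
`sup_x f^max_{VW}(x) = (1+V)/(1−W)` and `inf_x f^max_{VW}(x) = m`. -/
theorem fVWmax_bounds (V W : ℝ)
    (hV : V ∈ Set.Ioo (0 : ℝ) 1) (hW : W ∈ Set.Ioo (0 : ℝ) 1) :
    (∀ x : ℝ, fVWmax V W x ≤ (1 + V) / (1 - W)) ∧
    (∀ x : ℝ, fVWmax V W x = (1 + V) / (1 - W) ↔ ∃ k : ℤ, x = 2 * k * Real.pi) ∧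
    (∀ x : ℝ, (if V ≤ W then (1 - V) / (1 - W) else (1 + V) / (1 + W)) ≤ fVWmax V W x) ∧
    (∀ x : ℝ, fVWmax V W x = (if V ≤ W then (1 - V) / (1 - W) else (1 + V) / (1 + W)) ↔
      ∃ k : ℤ, x = (2 * k + 1) * Real.pi) ∧
    (⨆ x : ℝ, fVWmax V W x) = (1 + V) / (1 - W) ∧
    (⨅ x : ℝ, fVWmax V W x) =
      (if V ≤ W then (1 - V) / (1 - W) else (1 + V) / (1 + W)) := by
  have hV0 := hV.1
  have hV1 := hV.2
  have hW0 := hW.1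
  have hW1 := hW.2
  have hD : 0 < 1 - W := by linarith
  have hle : ∀ x α, fVW V W α x ≤ fVWmax V W x := fun x α =>
    le_ciSup (fVW_aux_bdd hV hW x) α
  have h1 : ∀ x : ℝ, fVWmax V W x ≤ (1 + V) / (1 - W) := fun x =>
    ciSup_le fun α => fVW_aux_le hV hW α x
  have h2 : ∀ x : ℝ, fVWmax V W x = (1 + V) / (1 - W) ↔ ∃ k : ℤ, x = 2 * k * Real.pi := by
    intro x
    have hk : (∃ k : ℤ, x = 2 * k * Real.pi) ↔ Real.cos x = 1 := by
      rw [Real.cos_eq_one_iff]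
      exact exists_congr fun k => ⟨fun h => by rw [h]; ring, fun h => by rw [← h]; ring⟩
    rw [hk]
    constructor
    · intro h
      obtain ⟨α, ha⟩ := fVW_aux_attain (V := V) hW x
      rw [ha] at h
      have hden := fVW_aux_den hW α
      unfold fVW at h
      rw [div_eq_div_iff (by linarith) (by linarith)] at h
      have c1 := Real.cos_le_one α
      have c2 := Real.cos_le_one (x + α)
      have e1 : Real.cos α = 1 := by
        apply le_antisymm c1
        by_contra hlt
        push Not at hlt
        have p1 := mul_nonneg (mul_nonneg hV0.le hD.le) (sub_nonneg.2 c2)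
        have p2 := mul_pos (mul_pos (by linarith : 0 < 1 + V) hW0) (sub_pos.2 hlt)
        nlinarith
      have e2 : Real.cos (x + α) = 1 := by
        rw [e1] at h
        have h' : 1 + V * Real.cos (x + α) = 1 + V := by
          apply mul_right_cancel₀ hD.ne'
          linarith
        apply mul_left_cancel₀ hV0.ne'
        linarith
      have e3 : Real.sin α = 0 := by
        have := Real.sin_sq_add_cos_sq α
        rw [e1] at this
        have h0 : Real.sin α ^ 2 = 0 := by linarith
        exact pow_eq_zero_iff (two_ne_zero) |>.1 h0
      rw [Real.cos_add, e1, e3] at e2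
      linarith
    · intro h
      apply le_antisymm (h1 x)
      have := hle x 0
      simpa [fVW, h] using this
  have hge : ∀ x : ℝ, (if V ≤ W then (1 - V) / (1 - W) else (1 + V) / (1 + W)) ≤ fVWmax V W x ∧
      (fVWmax V W x = (if V ≤ W then (1 - V) / (1 - W) else (1 + V) / (1 + W)) →
        Real.cos x = -1) := by
    intro x
    have c1 := Real.neg_one_le_cos x
    have c2 := Real.cos_le_one x
    split_ifs with hVW
    · have h := hle x 0
      simp only [fVW, add_zero, Real.cos_zero, mul_one] at h
      constructor
      · refine le_trans ?_ h
        gcongr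
        nlinarith
      · intro he
        rw [he, div_le_div_iff_of_pos_right hD] at h
        nlinarith
    · have h := hle x (-x)
      simp only [fVW, add_neg_cancel, Real.cos_zero, mul_one, Real.cos_neg] at h
      have hd := fVW_aux_den hW x
      have hd' : 0 < 1 - W * Real.cos x := by linarith
      constructor
      · refine le_trans ?_ h
        apply div_le_div_of_nonneg_left <;> nlinarith
      · intro he
        rw [he, div_le_div_iff_of_pos_left (by linarith) hd' (by linarith)] at h
        nlinarith
  have h4 : ∀ x : ℝ,
      fVWmax V W x = (if V ≤ W then (1 - V) / (1 - W) else (1 + V) / (1 + W)) ↔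
      ∃ k : ℤ, x = (2 * k + 1) * Real.pi := by
    intro x
    have hk : (∃ k : ℤ, x = (2 * k + 1) * Real.pi) ↔ Real.cos x = -1 := by
      rw [Real.cos_eq_neg_one_iff]
      exact exists_congr fun k => ⟨fun h => by rw [h]; ring, fun h => by rw [← h]; ring⟩
    rw [hk]
    refine ⟨(hge x).2, fun h => le_antisymm ?_ (hge x).1⟩
    have hs : Real.sin x = 0 := by
      have := Real.sin_sq_add_cos_sq x
      rw [h] at this
      have h0 : Real.sin x ^ 2 = 0 := by linarith
      exact pow_eq_zero_iff (two_ne_zero) |>.1 h0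
    refine ciSup_le fun α => ?_
    have hd := fVW_aux_den hW α
    have hd' : 0 < 1 - W * Real.cos α := by linarith
    have c1 := Real.neg_one_le_cos α
    have c2 := Real.cos_le_one α
    unfold fVW
    rw [Real.cos_add, h, hs]
    split_ifs with hVW
    · rw [div_le_div_iff₀ hd' hD]
      nlinarith [mul_nonneg (sub_nonneg.2 hVW) (sub_nonneg.2 c2)]
    · push Not at hVW
      rw [div_le_div_iff₀ hd' (by linarith)]
      nlinarith [mul_nonneg (sub_nonneg.2 hVW.le) (by linarith : 0 ≤ 1 + Real.cos α)]
  refine ⟨h1, h2, fun x => (hge x).1, h4, ?_, ?_⟩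
  · apply le_antisymm (ciSup_le h1)
    rw [← (h2 0).2 ⟨0, by simp⟩]
    exact le_ciSup (f := fun x => fVWmax V W x) ⟨_, by rintro _ ⟨x, rfl⟩; exact h1 x⟩ 0
  · apply le_antisymm ?_ (le_ciInf fun x => (hge x).1)
    rw [← (h4 Real.pi).2 ⟨0, by simp⟩]
    exact ciInf_le (f := fun x => fVWmax V W x)
      ⟨_, by rintro _ ⟨x, rfl⟩; exact (hge x).1⟩ Real.pi
end

section
/- Let V, W ∈ (0,1). Then: (i) for every x ∈ ℝ, f^min_{VW}(x) ≤ M, where M = (1+V)/(1+W) if V ≤ W and M = (1−V)/(1−W) if V ≥ W, with equality if and only if x is an odd multiple of π; (ii) for every x ∈ ℝ, f^min_{VW}(x) ≥ (1−V)/(1+W), with equality if and only if x is an even multiple of π. In particular sup_{x∈ℝ} f^min_{VW}(x) = M and inf_{x∈ℝ} f^min_{VW}(x) = (1−V)/(1+W). -/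
/-- `f^min_{VW}(x) = inf_{α ∈ ℝ} f_{VW}(α, x)`. -/
noncomputable def fVWmin (V W x : ℝ) : ℝ := ⨅ α : ℝ, fVW V W α x

lemma fVW_den_pos {W : ℝ} (hW : W ∈ Set.Ioo (0 : ℝ) 1) (a : ℝ) : 0 < 1 - W * Real.cos a := by
  obtain ⟨h0, h1⟩ := hW
  nlinarith [Real.cos_le_one a]

lemma fVW_lower {V W : ℝ} (hV : V ∈ Set.Ioo (0 : ℝ) 1) (hW : W ∈ Set.Ioo (0 : ℝ) 1) (a x : ℝ) :
    (1 - V) / (1 + W) ≤ fVW V W a x := by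
  have hd := fVW_den_pos hW a
  obtain ⟨h0, h1⟩ := hW
  obtain ⟨g0, g1⟩ := hV
  unfold fVW
  apply div_le_div₀ _ _ hd _
  all_goals nlinarith [Real.neg_one_le_cos a, Real.neg_one_le_cos (x + a)]

lemma fVWmin_le {V W : ℝ} (hV : V ∈ Set.Ioo (0 : ℝ) 1) (hW : W ∈ Set.Ioo (0 : ℝ) 1) (a x : ℝ) :
    fVWmin V W x ≤ fVW V W a x := by
  refine ciInf_le ⟨(1 - V) / (1 + W), ?_⟩ a
  rintro _ ⟨b, rfl⟩
  exact fVW_lower hV hW b x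

lemma fVWmin_attained {V W : ℝ} (hV : V ∈ Set.Ioo (0 : ℝ) 1) (hW : W ∈ Set.Ioo (0 : ℝ) 1)
    (x : ℝ) : ∃ a, fVWmin V W x = fVW V W a x := by
  have hc : Continuous (fun a => fVW V W a x) := by
    unfold fVW
    exact Continuous.div (by fun_prop) (by fun_prop) (fun a => (fVW_den_pos hW a).ne')
  have hp : Function.Periodic (fun a => fVW V W a x) (2 * Real.pi) := by
    intro a
    simp only [fVW]
    rw [← add_assoc, Real.cos_add_two_pi, Real.cos_add_two_pi]
  obtain ⟨a, -, ha⟩ := (isCompact_Icc (a := (0 : ℝ)) (b := 2 * Real.pi)).exists_isMinOn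
    ⟨0, by simp [Real.pi_pos.le]⟩ hc.continuousOn
  refine ⟨a, le_antisymm (fVWmin_le hV hW a x) (le_ciInf fun b => ?_)⟩
  obtain ⟨c, hc1, hc2⟩ := hp.exists_mem_Ico₀ (by positivity) b
  have := ha (Set.Ico_subset_Icc_self hc1)
  simp only [Set.mem_setOf_eq] at this
  exact this.trans_eq hc2.symm

lemma cos_neg_one_iff_odd (x : ℝ) : Real.cos x = -1 ↔ ∃ k : ℤ, x = (2 * k + 1) * Real.pi := by
  rw [Real.cos_eq_neg_one_iff]
  constructor <;> rintro ⟨k, hk⟩ <;> exact ⟨k, by linarith⟩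

lemma cos_one_iff_even (x : ℝ) : Real.cos x = 1 ↔ ∃ k : ℤ, x = 2 * k * Real.pi := by
  rw [Real.cos_eq_one_iff]
  constructor <;> rintro ⟨k, hk⟩ <;> exact ⟨k, by linarith⟩

lemma fVWmin_le_M {V W : ℝ} (hV : V ∈ Set.Ioo (0 : ℝ) 1) (hW : W ∈ Set.Ioo (0 : ℝ) 1) (x : ℝ)
    (hx : Real.cos x ≠ -1) :
    fVWmin V W x < (if V ≤ W then (1 + V) / (1 + W) else (1 - V) / (1 - W)) := by
  have hx' : -1 < Real.cos x := lt_of_le_of_ne (Real.neg_one_le_cos x) hx.symm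
  have hV' := hV
  have hW' := hW
  obtain ⟨h0, h1⟩ := hW'
  obtain ⟨g0, g1⟩ := hV'
  split_ifs with h
  · refine (fVWmin_le hV hW Real.pi x).trans_lt ?_
    simp only [fVW, Real.cos_add_pi, Real.cos_pi]
    rw [show 1 - W * -1 = 1 + W by ring]
    apply div_lt_div_of_pos_right _ (by linarith)
    nlinarith
  · refine (fVWmin_le hV hW (Real.pi - x) x).trans_lt ?_
    simp only [fVW, Real.cos_pi_sub]
    rw [show x + (Real.pi - x) = Real.pi by ring, Real.cos_pi,
      show 1 + V * -1 = 1 - V by ring]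
    apply div_lt_div_of_pos_left <;> nlinarith

lemma fVWmin_eq_M {V W : ℝ} (hV : V ∈ Set.Ioo (0 : ℝ) 1) (hW : W ∈ Set.Ioo (0 : ℝ) 1) (x : ℝ)
    (hx : Real.cos x = -1) :
    fVWmin V W x = (if V ≤ W then (1 + V) / (1 + W) else (1 - V) / (1 - W)) := by
  have hs : Real.sin x = 0 := by nlinarith [Real.sin_sq_add_cos_sq x]
  have hV' := hV
  have hW' := hW
  obtain ⟨h0, h1⟩ := hW'
  obtain ⟨g0, g1⟩ := hV'
  have hf : ∀ a, fVW V W a x = (1 - V * Real.cos a) / (1 - W * Real.cos a) := by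
    intro a
    simp only [fVW, Real.cos_add, hx, hs]
    ring
  apply le_antisymm
  · split_ifs with h
    · refine (fVWmin_le hV hW Real.pi x).trans_eq ?_
      simp [hf]
    · refine (fVWmin_le hV hW 0 x).trans_eq ?_
      simp [hf]
  · refine le_ciInf fun a => ?_
    have hd := fVW_den_pos hW a
    rw [hf]
    split_ifs with h
    · rw [div_le_div_iff₀ (by linarith) hd]
      nlinarith [mul_nonneg (sub_nonneg.2 h) (by linarith [Real.neg_one_le_cos a] : 0 ≤ Real.cos a + 1)]
    · rw [div_le_div_iff₀ (by linarith) hd]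
      nlinarith [mul_nonneg (sub_nonneg.2 (not_le.1 h).le) (by linarith [Real.cos_le_one a] : 0 ≤ 1 - Real.cos a)]

lemma fVWmin_eq_low_iff {V W : ℝ} (hV : V ∈ Set.Ioo (0 : ℝ) 1) (hW : W ∈ Set.Ioo (0 : ℝ) 1)
    (x : ℝ) : fVWmin V W x = (1 - V) / (1 + W) ↔ Real.cos x = 1 := by
  have hV' := hV
  have hW' := hW
  obtain ⟨h0, h1⟩ := hW'
  obtain ⟨g0, g1⟩ := hV'
  constructor
  · intro h
    obtain ⟨a, ha⟩ := fVWmin_attained hV hW x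
    have hd := fVW_den_pos hW a
    rw [ha, fVW, div_eq_div_iff hd.ne' (by linarith)] at h
    have c1 := Real.neg_one_le_cos a
    have c2 := Real.neg_one_le_cos (x + a)
    have e : V * (1 + W) * (Real.cos (x + a) + 1) + (1 - V) * W * (Real.cos a + 1) = 0 := by
      linarith
    have p1 : 0 < V * (1 + W) := by positivity
    have p2 : 0 < (1 - V) * W := mul_pos (by linarith) h0
    have q1 : Real.cos (x + a) = -1 := by
      by_contra hne
      have : 0 < Real.cos (x + a) + 1 := by
        have := lt_of_le_of_ne c2 (Ne.symm hne)
        linarith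
      have := mul_pos p1 this
      have := mul_nonneg p2.le (by linarith : 0 ≤ Real.cos a + 1)
      linarith
    have q2 : Real.cos a = -1 := by
      rw [q1] at e
      have : (1 - V) * W * (Real.cos a + 1) = 0 := by linarith
      have := (mul_eq_zero.1 this).resolve_left p2.ne'
      linarith
    have q3 : Real.sin a = 0 := by nlinarith [Real.sin_sq_add_cos_sq a]
    rw [Real.cos_add, q2, q3] at q1
    linarith
  · intro h
    apply le_antisymm _ (le_ciInf fun a => fVW_lower hV hW a x)
    refine (fVWmin_le hV hW Real.pi x).trans_eq ?_
    simp only [fVW, Real.cos_add_pi, Real.cos_pi, h]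
    ring

/-- For `V, W ∈ (0,1)`:
(i) `f^min_{VW}(x) ≤ M` (`M = (1+V)/(1+W)` if `V ≤ W`, `M = (1−V)/(1−W)` if `V ≥ W`),
with equality iff `x` is an odd multiple of `π`;
(ii) `f^min_{VW}(x) ≥ (1−V)/(1+W)` with equality iff `x` is an even multiple of `π`.
In particular `sup_x f^min_{VW}(x) = M` and `inf_x f^min_{VW}(x) = (1−V)/(1+W)`. -/
theorem fVWmin_bounds (V W : ℝ)
    (hV : V ∈ Set.Ioo (0 : ℝ) 1) (hW : W ∈ Set.Ioo (0 : ℝ) 1) :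
    (∀ x : ℝ, fVWmin V W x ≤ (if V ≤ W then (1 + V) / (1 + W) else (1 - V) / (1 - W))) ∧
    (∀ x : ℝ, fVWmin V W x = (if V ≤ W then (1 + V) / (1 + W) else (1 - V) / (1 - W)) ↔
      ∃ k : ℤ, x = (2 * k + 1) * Real.pi) ∧
    (∀ x : ℝ, (1 - V) / (1 + W) ≤ fVWmin V W x) ∧
    (∀ x : ℝ, fVWmin V W x = (1 - V) / (1 + W) ↔ ∃ k : ℤ, x = 2 * k * Real.pi) ∧
    (⨆ x : ℝ, fVWmin V W x) =
      (if V ≤ W then (1 + V) / (1 + W) else (1 - V) / (1 - W)) ∧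
    (⨅ x : ℝ, fVWmin V W x) = (1 - V) / (1 + W) := by
  have hle : ∀ x, fVWmin V W x ≤
      (if V ≤ W then (1 + V) / (1 + W) else (1 - V) / (1 - W)) := fun x => by
    by_cases hx : Real.cos x = -1
    · exact (fVWmin_eq_M hV hW x hx).le
    · exact (fVWmin_le_M hV hW x hx).le
  have hge : ∀ x, (1 - V) / (1 + W) ≤ fVWmin V W x := fun x =>
    le_ciInf fun a => fVW_lower hV hW a x
  refine ⟨hle, fun x => ?_, hge, fun x => ?_, ?_, ?_⟩
  · rw [← cos_neg_one_iff_odd]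
    refine ⟨fun h => ?_, fVWmin_eq_M hV hW x⟩
    by_contra hx
    exact (fVWmin_le_M hV hW x hx).ne h
  · rw [← cos_one_iff_even]
    exact fVWmin_eq_low_iff hV hW x
  · apply le_antisymm (ciSup_le hle)
    rw [← fVWmin_eq_M hV hW Real.pi Real.cos_pi]
    exact le_ciSup (f := fun x => fVWmin V W x) ⟨_, by rintro _ ⟨x, rfl⟩; exact hle x⟩ Real.pi
  · refine le_antisymm ?_ (le_ciInf hge)
    rw [← (fVWmin_eq_low_iff hV hW 0).2 Real.cos_zero]
    exact ciInf_le (f := fun x => fVWmin V W x) ⟨_, by rintro _ ⟨x, rfl⟩; exact hge x⟩ 0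
end

section
/- Let V₁, W₁ ∈ (0,1). Then sup_{β∈ℝ} H^max(β) = (1+V₁)/((1−W₁)(1−V₁)), and this supremum is attained at β if and only if β is an odd multiple of π. Moreover inf_{β∈ℝ} H^min(β) = (1−V₁)/((1−W₁)(1+V₁)) if V₁ ≤ W₁ and inf_{β∈ℝ} H^min(β) = 1/(1+W₁) if V₁ ≥ W₁, and this infimum is attained at β if and only if β is an odd multiple of π. -/
/-- `H(x, β) = f^max_{V₁W₁}(x)/(1 + V₁·cos(x + β))`. -/
noncomputable def Hfun (V₁ W₁ x β : ℝ) : ℝ :=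
    fVWmax V₁ W₁ x / (1 + V₁ * Real.cos (x + β))

/-- `H^max(β) = sup_{x ∈ ℝ} H(x, β)`. -/
noncomputable def Hmax (V₁ W₁ β : ℝ) : ℝ := ⨆ x : ℝ, Hfun V₁ W₁ x β

/-- `H^min(β) = inf_{x ∈ ℝ} H(x, β)`. -/
noncomputable def Hmin (V₁ W₁ β : ℝ) : ℝ := ⨅ x : ℝ, Hfun V₁ W₁ x β

/-- Closed form of `f^max` as a function of `c = cos x`. -/
noncomputable def TT (v w c : ℝ) : ℝ :=
  ((1 + v * w * c) + Real.sqrt ((1 + v * w * c) ^ 2 - (1 - w ^ 2) * (1 - v ^ 2))) / (1 - w ^ 2)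

lemma TT_disc {v w c : ℝ} (hv : 0 < v) (hv1 : v < 1) (hw : 0 < w) (hw1 : w < 1) (hc : -1 ≤ c) :
    0 ≤ (1 + v * w * c) ^ 2 - (1 - w ^ 2) * (1 - v ^ 2) := by
  have h0 : 0 < v * w := mul_pos hv hw
  have h1 : v * w < 1 := by nlinarith
  have h2 : 1 - v * w ≤ 1 + v * w * c := by nlinarith
  have h3 : (1 - v * w) ^ 2 ≤ (1 + v * w * c) ^ 2 := by
    apply pow_le_pow_left₀ <;> linarith
  nlinarith [sq_nonneg (v - w)]

lemma TT_strictMono {v w a b : ℝ} (hv : 0 < v) (hv1 : v < 1) (hw : 0 < w) (hw1 : w < 1)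
    (ha : -1 ≤ a) (hab : a < b) : TT v w a < TT v w b := by
  have h0 : 0 < v * w := mul_pos hv hw
  have h1 : v * w < 1 := by nlinarith
  have h2 : 1 - v * w ≤ 1 + v * w * a := by nlinarith
  have h3 : 1 + v * w * a < 1 + v * w * b := by nlinarith
  have h4 : 0 < 1 - w ^ 2 := by nlinarith
  unfold TT
  apply div_lt_div_of_pos_right _ h4
  apply add_lt_add_of_lt_of_le h3
  apply Real.sqrt_le_sqrt
  have : (1 + v * w * a) ^ 2 ≤ (1 + v * w * b) ^ 2 := by
    apply pow_le_pow_left₀ <;> linarith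
  linarith

lemma TT_quad {v w c : ℝ} (hv : 0 < v) (hv1 : v < 1) (hw : 0 < w) (hw1 : w < 1) (hc : -1 ≤ c) :
    (TT v w c - 1) ^ 2 = v ^ 2 + (TT v w c) ^ 2 * w ^ 2 + 2 * TT v w c * v * w * c := by
  have h4 : 0 < 1 - w ^ 2 := by nlinarith
  have hs := Real.sq_sqrt (TT_disc hv hv1 hw hw1 hc)
  have ht : TT v w c * (1 - w ^ 2) = (1 + v * w * c) +
      Real.sqrt ((1 + v * w * c) ^ 2 - (1 - w ^ 2) * (1 - v ^ 2)) := by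
    unfold TT; field_simp
  generalize Real.sqrt ((1 + v * w * c) ^ 2 - (1 - w ^ 2) * (1 - v ^ 2)) = s at *
  generalize TT v w c = t at *
  have hs' : s = t * (1 - w ^ 2) - (1 + v * w * c) := by linarith
  rw [hs'] at hs
  apply mul_left_cancel₀ h4.ne'
  linear_combination hs

lemma TT_one_le {v w c : ℝ} (hv : 0 < v) (hw : 0 < w) (hw1 : w < 1)
    (hc : -1 ≤ c) : 1 ≤ TT v w c := by
  have h4 : 0 < 1 - w ^ 2 := by nlinarith
  have h0 : 0 < v * w := mul_pos hv hw
  unfold TT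
  rw [le_div_iff₀ h4]
  have h5 : 0 ≤ w ^ 2 + v ^ 2 + 2 * v * w * c := by nlinarith [sq_nonneg (v - w)]
  have := Real.abs_le_sqrt (x := w ^ 2 + v * w * c)
    (y := (1 + v * w * c) ^ 2 - (1 - w ^ 2) * (1 - v ^ 2)) (by nlinarith [mul_nonneg h4.le h5])
  have := neg_abs_le (w ^ 2 + v * w * c)
  linarith

lemma fVWmax_eq {v w : ℝ} (hv : 0 < v) (hv1 : v < 1) (hw : 0 < w) (hw1 : w < 1) (x : ℝ) :
    fVWmax v w x = TT v w (Real.cos x) := by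
  have hq := TT_quad hv hv1 hw hw1 (Real.neg_one_le_cos x)
  have h1 := TT_one_le hv hw hw1 (Real.neg_one_le_cos x)
  have hcs := Real.sin_sq_add_cos_sq x
  generalize TT v w (Real.cos x) = t at *
  have hden : ∀ α, 0 < 1 - w * Real.cos α := fun α => by nlinarith [Real.cos_le_one α]
  have hAB : (v * Real.cos x + t * w) ^ 2 + (v * Real.sin x) ^ 2 = (t - 1) ^ 2 := by
    linear_combination -hq + v ^ 2 * hcs
  have key : IsGreatest (Set.range fun α => fVW v w α x) t := by
    constructor
    · have h2 := Complex.norm_mul_cos_arg (⟨v * Real.cos x + t * w, -(v * Real.sin x)⟩ : ℂ)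
      have h3 := Complex.norm_mul_sin_arg (⟨v * Real.cos x + t * w, -(v * Real.sin x)⟩ : ℂ)
      have h4 : ‖(⟨v * Real.cos x + t * w, -(v * Real.sin x)⟩ : ℂ)‖ = t - 1 := by
        rw [Complex.norm_eq_sqrt_sq_add_sq, neg_sq, hAB, Real.sqrt_sq (by linarith)]
      rw [h4] at h2 h3
      refine ⟨Complex.arg (⟨v * Real.cos x + t * w, -(v * Real.sin x)⟩ : ℂ), ?_⟩
      generalize Complex.arg (⟨v * Real.cos x + t * w, -(v * Real.sin x)⟩ : ℂ) = α at *
      simp only at h2 h3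
      have h5 := Real.sin_sq_add_cos_sq α
      simp only [fVW]
      rw [div_eq_iff (hden α).ne', Real.cos_add]
      linear_combination (-Real.cos α) * h2 - Real.sin α * h3 + (t - 1) * h5
    · rintro _ ⟨α, rfl⟩
      simp only [fVW]
      rw [div_le_iff₀ (hden α), Real.cos_add]
      have h5 := Real.sin_sq_add_cos_sq α
      have : (v * Real.cos x + t * w) * Real.cos α - v * Real.sin x * Real.sin α ≤ t - 1 := by
        refine (abs_le_of_sq_le_sq' ?_ (by linarith)).2
        rw [← hAB]
        have : 0 ≤ ((v * Real.cos x + t * w) * Real.sin α + v * Real.sin x * Real.cos α) ^ 2 :=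
          sq_nonneg _
        nlinarith
      linarith
  exact key.csSup_eq

lemma TT_one {v w : ℝ} (hv : 0 < v) (hw : 0 < w) (hw1 : w < 1) :
    TT v w 1 = (1 + v) / (1 - w) := by
  have h4 : 0 < 1 - w ^ 2 := by nlinarith
  have h5 : 0 < 1 - w := by linarith
  unfold TT
  rw [show (1 + v * w * 1) ^ 2 - (1 - w ^ 2) * (1 - v ^ 2) = (v + w) ^ 2 by ring,
    Real.sqrt_sq (by linarith), div_eq_div_iff h4.ne' h5.ne']
  ring

lemma TT_neg_one {v w : ℝ} (hw : 0 < w) (hw1 : w < 1) :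
    TT v w (-1) = if v ≤ w then (1 - v) / (1 - w) else (1 + v) / (1 + w) := by
  have h4 : 0 < 1 - w ^ 2 := by nlinarith
  have h5 : 0 < 1 - w := by linarith
  have h6 : 0 < 1 + w := by linarith
  unfold TT
  split_ifs with h
  · rw [show (1 + v * w * (-1)) ^ 2 - (1 - w ^ 2) * (1 - v ^ 2) = (w - v) ^ 2 by ring,
      Real.sqrt_sq (by linarith), div_eq_div_iff h4.ne' h5.ne']
    ring
  · rw [show (1 + v * w * (-1)) ^ 2 - (1 - w ^ 2) * (1 - v ^ 2) = (v - w) ^ 2 by ring,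
      Real.sqrt_sq (by linarith), div_eq_div_iff h4.ne' h6.ne']
    ring

lemma sup_abstract (G : ℝ → ℝ → ℝ) (M : ℝ) (P : ℝ → Prop) (b : ℝ) (hb : P b)
    (hle : ∀ x β, G x β ≤ M) (hatt : ∀ β, ∃ x, ∀ y, G y β ≤ G x β)
    (h1 : ∀ x β, G x β = M → P β) (h2 : ∀ β, P β → ∃ x, G x β = M) :
    (⨆ β, ⨆ x, G x β) = M ∧ ∀ β, (⨆ x, G x β) = M ↔ P β := by
  have hiff : ∀ β, (⨆ x, G x β) = M ↔ P β := by
    intro β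
    constructor
    · intro h
      obtain ⟨x, hx⟩ := hatt β
      apply h1 x β
      rw [← h]
      have : IsGreatest (Set.range fun x => G x β) (G x β) :=
        ⟨⟨x, rfl⟩, by rintro _ ⟨y, rfl⟩; exact hx y⟩
      exact this.csSup_eq.symm
    · intro h
      obtain ⟨x, hx⟩ := h2 β h
      have : IsGreatest (Set.range fun x => G x β) M :=
        ⟨⟨x, hx⟩, by rintro _ ⟨y, rfl⟩; exact hle y β⟩
      exact this.csSup_eq
  refine ⟨?_, hiff⟩
  have : IsGreatest (Set.range fun β => ⨆ x, G x β) M :=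
    ⟨⟨b, (hiff b).2 hb⟩, by rintro _ ⟨y, rfl⟩; exact ciSup_le fun x => hle x y⟩
  exact this.csSup_eq

lemma inf_abstract (G : ℝ → ℝ → ℝ) (M : ℝ) (P : ℝ → Prop) (b : ℝ) (hb : P b)
    (hle : ∀ x β, M ≤ G x β) (hatt : ∀ β, ∃ x, ∀ y, G x β ≤ G y β)
    (h1 : ∀ x β, G x β = M → P β) (h2 : ∀ β, P β → ∃ x, G x β = M) :
    (⨅ β, ⨅ x, G x β) = M ∧ ∀ β, (⨅ x, G x β) = M ↔ P β := by
  have hiff : ∀ β, (⨅ x, G x β) = M ↔ P β := by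
    intro β
    constructor
    · intro h
      obtain ⟨x, hx⟩ := hatt β
      apply h1 x β
      rw [← h]
      have : IsLeast (Set.range fun x => G x β) (G x β) :=
        ⟨⟨x, rfl⟩, by rintro _ ⟨y, rfl⟩; exact hx y⟩
      exact this.csInf_eq.symm
    · intro h
      obtain ⟨x, hx⟩ := h2 β h
      have : IsLeast (Set.range fun x => G x β) M :=
        ⟨⟨x, hx⟩, by rintro _ ⟨y, rfl⟩; exact hle y β⟩
      exact this.csInf_eq
  refine ⟨?_, hiff⟩
  have : IsLeast (Set.range fun β => ⨅ x, G x β) M :=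
    ⟨⟨b, (hiff b).2 hb⟩, by rintro _ ⟨y, rfl⟩; exact le_ciInf fun x => hle x y⟩
  exact this.csInf_eq

lemma odd_pi_iff (β : ℝ) : (∃ k : ℤ, β = (2 * k + 1) * Real.pi) ↔ Real.cos β = -1 := by
  rw [Real.cos_eq_neg_one_iff]
  constructor
  · rintro ⟨k, rfl⟩; exact ⟨k, by ring⟩
  · rintro ⟨k, rfl⟩; exact ⟨k, by ring⟩

/-- For `V₁, W₁ ∈ (0,1)`:
`sup_β H^max(β) = (1+V₁)/((1−W₁)(1−V₁))`, attained at `β` iff `β` is an odd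
multiple of `π`; and `inf_β H^min(β) = (1−V₁)/((1−W₁)(1+V₁))` if `V₁ ≤ W₁`,
`= 1/(1+W₁)` if `V₁ ≥ W₁`, attained at `β` iff `β` is an odd multiple of `π`. -/
theorem Hmax_sup_Hmin_inf (V₁ W₁ : ℝ)
    (hV : V₁ ∈ Set.Ioo (0 : ℝ) 1) (hW : W₁ ∈ Set.Ioo (0 : ℝ) 1) :
    (⨆ β : ℝ, Hmax V₁ W₁ β) = (1 + V₁) / ((1 - W₁) * (1 - V₁)) ∧
    (∀ β : ℝ, Hmax V₁ W₁ β = (1 + V₁) / ((1 - W₁) * (1 - V₁)) ↔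
      ∃ k : ℤ, β = (2 * k + 1) * Real.pi) ∧
    (⨅ β : ℝ, Hmin V₁ W₁ β) =
      (if V₁ ≤ W₁ then (1 - V₁) / ((1 - W₁) * (1 + V₁)) else 1 / (1 + W₁)) ∧
    (∀ β : ℝ, Hmin V₁ W₁ β =
        (if V₁ ≤ W₁ then (1 - V₁) / ((1 - W₁) * (1 + V₁)) else 1 / (1 + W₁)) ↔
      ∃ k : ℤ, β = (2 * k + 1) * Real.pi) := by
  obtain ⟨hv, hv1⟩ := hV
  obtain ⟨hw, hw1⟩ := hW
  have hG : ∀ x β, Hfun V₁ W₁ x β = TT V₁ W₁ (Real.cos x) / (1 + V₁ * Real.cos (x + β)) := by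
    intro x β
    rw [Hfun, fVWmax_eq hv hv1 hw hw1]
  have hden : ∀ y, 0 < 1 + V₁ * Real.cos y := fun y => by nlinarith [Real.neg_one_le_cos y]
  have hT : ∀ x, 0 < TT V₁ W₁ (Real.cos x) := fun x =>
    lt_of_lt_of_le one_pos (TT_one_le hv hw hw1 (Real.neg_one_le_cos x))
  have hmono : ∀ a b, -1 ≤ a → a ≤ b → TT V₁ W₁ a ≤ TT V₁ W₁ b := by
    intro a b ha hab
    rcases hab.eq_or_lt with h | h
    · rw [h]
    · exact (TT_strictMono hv hv1 hw hw1 ha h).le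
  have hcomp : ∀ β, IsCompact (Set.range fun x => Hfun V₁ W₁ x β) := by
    intro β
    have hp : Function.Periodic (fun x => Hfun V₁ W₁ x β) (2 * Real.pi) := by
      intro x
      simp only [hG]
      rw [show x + 2 * Real.pi + β = x + β + 2 * Real.pi by ring, Real.cos_add_two_pi,
        Real.cos_add_two_pi]
    refine hp.compact_of_continuous (by positivity) ?_
    simp only [hG]
    refine Continuous.div ?_ (by fun_prop) (fun x => (hden _).ne')
    unfold TT
    fun_prop
  have hmax : ∀ β, ∃ x, ∀ y, Hfun V₁ W₁ y β ≤ Hfun V₁ W₁ x β := by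
    intro β
    obtain ⟨_, ⟨x, rfl⟩, hx⟩ := (hcomp β).exists_isGreatest (Set.range_nonempty _)
    exact ⟨x, fun y => hx ⟨y, rfl⟩⟩
  have hmin : ∀ β, ∃ x, ∀ y, Hfun V₁ W₁ x β ≤ Hfun V₁ W₁ y β := by
    intro β
    obtain ⟨_, ⟨x, rfl⟩, hx⟩ := (hcomp β).exists_isLeast (Set.range_nonempty _)
    exact ⟨x, fun y => hx ⟨y, rfl⟩⟩
  have hM : (1 + V₁) / ((1 - W₁) * (1 - V₁)) = TT V₁ W₁ 1 / (1 - V₁) := by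
    rw [TT_one hv hw hw1, div_div]
  have hm : (if V₁ ≤ W₁ then (1 - V₁) / ((1 - W₁) * (1 + V₁)) else 1 / (1 + W₁))
      = TT V₁ W₁ (-1) / (1 + V₁) := by
    rw [TT_neg_one hw hw1]
    split_ifs
    · rw [div_div]
    · field_simp
  have hv' : 0 < 1 - V₁ := by linarith
  have hT1 : 0 < TT V₁ W₁ 1 := by simpa using hT 0
  have hT2 : 0 < TT V₁ W₁ (-1) := by simpa using hT Real.pi
  rw [hM, hm]
  simp only [odd_pi_iff]
  rw [← and_assoc]
  constructor
  · apply sup_abstract (fun x β => Hfun V₁ W₁ x β) _ (fun β => Real.cos β = -1) Real.pi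
      Real.cos_pi _ hmax
    · intro x β h
      simp only [hG] at h
      rw [div_eq_div_iff (hden _).ne' hv'.ne'] at h
      have a1 := Real.cos_le_one x
      have a2 := Real.neg_one_le_cos (x + β)
      have h1 : Real.cos x = 1 := by
        by_contra hne
        have := TT_strictMono hv hv1 hw hw1 (Real.neg_one_le_cos x) (lt_of_le_of_ne a1 hne)
        nlinarith [mul_nonneg hT1.le (mul_nonneg hv.le (by linarith : 0 ≤ Real.cos (x + β) + 1))]
      rw [h1] at h
      have h2 := mul_left_cancel₀ hT1.ne' h
      have h3 : Real.cos (x + β) = -1 := by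
        apply mul_left_cancel₀ hv.ne'; linarith
      rw [Real.cos_add, h1, Real.sin_eq_zero_iff_cos_eq.2 (Or.inl h1)] at h3
      linarith
    · intro β h
      refine ⟨0, ?_⟩
      simp only [hG, zero_add, Real.cos_zero, h]
      ring_nf
    · intro x β
      simp only [hG]
      have a2 := Real.neg_one_le_cos (x + β)
      exact div_le_div₀ hT1.le (hmono _ _ (Real.neg_one_le_cos x) (Real.cos_le_one x)) hv'
        (by nlinarith)
  · apply inf_abstract (fun x β => Hfun V₁ W₁ x β) _ (fun β => Real.cos β = -1) Real.pi
      Real.cos_pi _ hmin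
    · intro x β h
      simp only [hG] at h
      rw [div_eq_div_iff (hden _).ne' (by linarith)] at h
      have a1 := Real.neg_one_le_cos x
      have a2 := Real.cos_le_one (x + β)
      have h1 : Real.cos x = -1 := by
        by_contra hne
        have := TT_strictMono hv hv1 hw hw1 le_rfl (lt_of_le_of_ne a1 (Ne.symm hne))
        nlinarith [mul_nonneg hT2.le (mul_nonneg hv.le (by linarith : 0 ≤ 1 - Real.cos (x + β)))]
      rw [h1] at h
      have h2 := mul_left_cancel₀ hT2.ne' h
      have h3 : Real.cos (x + β) = 1 := by
        apply mul_left_cancel₀ hv.ne'; linarith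
      rw [Real.cos_add, h1, Real.sin_eq_zero_iff_cos_eq.2 (Or.inr h1)] at h3
      linarith
    · intro β h
      refine ⟨Real.pi, ?_⟩
      simp only [hG, Real.cos_pi, add_comm Real.pi, Real.cos_add_pi, h]
      ring_nf
    · intro x β
      simp only [hG]
      have a2 := Real.cos_le_one (x + β)
      exact div_le_div₀ (hT x).le (hmono _ _ le_rfl (Real.neg_one_le_cos x)) (hden _)
        (by nlinarith)
end

section
/- Let V₁, W₁ ∈ (0,1) and Q₁ = V₁(1+W₁)/(2W₁). Then inf_{β∈ℝ} H^max(β) = (1/(1−W₁))·(1−V₁²)/(1−Q₁V₁) if Q₁ ≤ 1, and inf_{β∈ℝ} H^max(β) = (1/(1+W₁))·(1+V₁)/(1−V₁) if Q₁ ≥ 1; this infimum is attained at β if and only if β is an even multiple of π. Moreover sup_{β∈ℝ} H^min(β) = 1/(1−W₁), and this supremum is attained at β if and only if β is an even multiple of π. -/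
open Real in
/-- Characterization of the maximum. -/
lemma fVWmax_eq_of (V W x m : ℝ) (hW0 : 0 < W) (hW1 : W < 1)
    (hm : 1 ≤ m) (h : (m - 1) ^ 2 = V ^ 2 + m ^ 2 * W ^ 2 + 2 * V * m * W * cos x) :
    fVWmax V W x = m := by
  have hden : ∀ α : ℝ, 0 < 1 - W * cos α := fun α => by nlinarith [cos_le_one α]
  have hAB : (V * cos x + m * W) ^ 2 + (V * sin x) ^ 2 = (m - 1) ^ 2 := by
    rw [h]; linear_combination V ^ 2 * sin_sq_add_cos_sq x
  have hub : ∀ α : ℝ, fVW V W α x ≤ m := by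
    intro α
    unfold fVW
    rw [div_le_iff₀ (hden α), cos_add]
    have h1 : ((V * cos x + m * W) * cos α - (V * sin x) * sin α) ^ 2 ≤ (m - 1) ^ 2 := by
      have e : (m - 1) ^ 2 = ((V * cos x + m * W) * cos α - (V * sin x) * sin α) ^ 2
          + ((V * cos x + m * W) * sin α + (V * sin x) * cos α) ^ 2 := by
        linear_combination -hAB - ((V * cos x + m * W) ^ 2 + (V * sin x) ^ 2) *
          sin_sq_add_cos_sq α
      nlinarith [sq_nonneg ((V * cos x + m * W) * sin α + (V * sin x) * cos α)]
    have h2 := abs_le_of_sq_le_sq h1 (by linarith)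
    linarith [le_abs_self ((V * cos x + m * W) * cos α - (V * sin x) * sin α)]
  have hat : ∃ α : ℝ, fVW V W α x = m := by
    let z : ℂ := ⟨V * cos x + m * W, -(V * sin x)⟩
    have hn : ‖z‖ = m - 1 := by
      have h0 : ‖z‖ ^ 2 = (m - 1) ^ 2 := by
        rw [Complex.sq_norm, Complex.normSq_apply, ← hAB]; simp only [z]; ring
      exact (pow_left_inj₀ (norm_nonneg _) (by linarith) two_ne_zero).1 h0
    have hc := Complex.norm_mul_cos_arg z
    have hs := Complex.norm_mul_sin_arg z
    rw [hn] at hc hs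
    simp only [z] at hc hs
    refine ⟨Complex.arg z, ?_⟩
    unfold fVW
    rw [div_eq_iff (hden _).ne', cos_add]
    simp only [z]
    set a := Complex.arg ⟨V * cos x + m * W, -(V * sin x)⟩ with ha
    rcases eq_or_lt_of_le hm with h1 | h1
    · subst h1
      have e1 : V * cos x + 1 * W = 0 := by linarith
      have e2 : V * sin x = 0 := by linarith
      linear_combination cos a * e1 - sin a * e2
    · have hne : m - 1 ≠ 0 := by linarith
      apply mul_left_cancel₀ hne
      linear_combination -(m - 1) * cos a * hc - (m - 1) * sin a * hs
        + (m - 1) ^ 2 * sin_sq_add_cos_sq a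
  obtain ⟨α, hα⟩ := hat
  apply le_antisymm (ciSup_le hub)
  rw [← hα]
  exact le_ciSup (f := fun α => fVW V W α x) ⟨m, by rintro _ ⟨a, rfl⟩; exact hub a⟩ α

open Real in
/-- Explicit formula for the maximum as a function of `c = cos x`. -/
noncomputable def mm (V W c : ℝ) : ℝ :=
  ((1 + V * W * c) + √((1 + V * W * c) ^ 2 - (1 - W ^ 2) * (1 - V ^ 2))) / (1 - W ^ 2)

open Real in
lemma mm_spec (V W c : ℝ) (hV0 : 0 < V) (hW0 : 0 < W) (hW1 : W < 1)
    (hc : c ∈ Set.Icc (-1 : ℝ) 1) :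
    1 ≤ mm V W c ∧
    (mm V W c - 1) ^ 2 = V ^ 2 + (mm V W c) ^ 2 * W ^ 2 + 2 * V * (mm V W c) * W * c := by
  obtain ⟨hc1, hc2⟩ := hc
  have hw : 0 < 1 - W ^ 2 := by nlinarith
  have hD' : (W + V * c) ^ 2 ≤ (1 + V * W * c) ^ 2 - (1 - W ^ 2) * (1 - V ^ 2) := by
    have : 0 ≤ V ^ 2 * (1 - c ^ 2) * (1 - W ^ 2) :=
      mul_nonneg (mul_nonneg (sq_nonneg _) (by nlinarith)) hw.le
    nlinarith
  have hs := sq_sqrt ((sq_nonneg _).trans hD')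
  have ha : |W + V * c| ≤ √((1 + V * W * c) ^ 2 - (1 - W ^ 2) * (1 - V ^ 2)) :=
    abs_le_sqrt hD'
  have hm : mm V W c * (1 - W ^ 2) =
      (1 + V * W * c) + √((1 + V * W * c) ^ 2 - (1 - W ^ 2) * (1 - V ^ 2)) := by
    unfold mm; rw [div_mul_cancel₀ _ hw.ne']
  set s := √((1 + V * W * c) ^ 2 - (1 - W ^ 2) * (1 - V ^ 2))
  constructor
  · have h1 : -(W * (W + V * c)) ≤ s := by
      have := neg_abs_le (W + V * c)
      have h3 := abs_nonneg (W + V * c)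
      nlinarith
    by_contra hlt
    push Not at hlt
    nlinarith
  · have hs' : s = mm V W c * (1 - W ^ 2) - (1 + V * W * c) := by linarith
    rw [hs'] at hs
    apply mul_left_cancel₀ hw.ne'
    linear_combination hs

lemma mm_strictMono (V W c d : ℝ) (hV0 : 0 < V) (hV1 : V < 1) (hW0 : 0 < W) (hW1 : W < 1)
    (hc : -1 ≤ c) (hcd : c < d) : mm V W c < mm V W d := by
  have hw : 0 < 1 - W ^ 2 := by nlinarith
  unfold mm
  have hvw : 0 < V * W := mul_pos hV0 hW0
  have hvw1 : V * W < 1 := by nlinarith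
  have h1 : V * W * c < V * W * d := mul_lt_mul_of_pos_left hcd hvw
  have h0 : 0 < 1 + V * W * c := by nlinarith
  apply div_lt_div_of_pos_right _ hw
  apply add_lt_add_of_lt_of_le (by linarith)
  apply Real.sqrt_le_sqrt
  nlinarith

lemma mm_eq_of (V W c m : ℝ) (hV0 : 0 < V) (hW0 : 0 < W) (hW1 : W < 1)
    (hc : c ∈ Set.Icc (-1 : ℝ) 1) (hm : 1 ≤ m)
    (h : (m - 1) ^ 2 = V ^ 2 + m ^ 2 * W ^ 2 + 2 * V * m * W * c) : mm V W c = m := by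
  obtain ⟨h1, h2⟩ := mm_spec V W c hV0 hW0 hW1 hc
  have hx : Real.cos (Real.arccos c) = c := Real.cos_arccos hc.1 hc.2
  rw [← fVWmax_eq_of V W (Real.arccos c) m hW0 hW1 hm (by rw [hx]; exact h),
    fVWmax_eq_of V W (Real.arccos c) _ hW0 hW1 h1 (by rw [hx]; exact h2)]

lemma fVWmax_eq_s5 (V W x : ℝ) (hV0 : 0 < V) (hW0 : 0 < W) (hW1 : W < 1) :
    fVWmax V W x = mm V W (Real.cos x) := by
  obtain ⟨h1, h2⟩ := mm_spec V W (Real.cos x) hV0 hW0 hW1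
    ⟨Real.neg_one_le_cos x, Real.cos_le_one x⟩
  exact fVWmax_eq_of V W x _ hW0 hW1 h1 h2

/-- An upper bound criterion. -/
lemma mm_le_of (V W c m : ℝ) (hV0 : 0 < V) (hW0 : 0 < W) (hW1 : W < 1)
    (hc : c ∈ Set.Icc (-1 : ℝ) 1) (hm : 1 ≤ m)
    (h : V ^ 2 + m ^ 2 * W ^ 2 + 2 * V * m * W * c ≤ (m - 1) ^ 2) : mm V W c ≤ m := by
  obtain ⟨h1, h2⟩ := mm_spec V W c hV0 hW0 hW1 hc
  by_contra hlt
  push Not at hlt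
  have hw : 0 < 1 - W ^ 2 := by nlinarith
  set n := mm V W c
  -- `q(t) = (1-W²)t² - 2(1+VWc)t + 1 - V²`, with `q(1) ≤ 0`, `q(m) ≥ 0`, `q(n) = 0`
  have hq1 : 0 ≤ V ^ 2 + W ^ 2 + 2 * V * W * c := by
    nlinarith [sq_nonneg (V - W), mul_nonneg (mul_pos hV0 hW0).le (by linarith [hc.1] : 0 ≤ 1 + c)]
  have key : (n - 1) * ((m - 1) ^ 2 - (V ^ 2 + m ^ 2 * W ^ 2 + 2 * V * m * W * c))
      = - (n - m) * (V ^ 2 + W ^ 2 + 2 * V * W * c)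
        + (m - 1) * ((n - 1) ^ 2 - (V ^ 2 + n ^ 2 * W ^ 2 + 2 * V * n * W * c))
        - (1 - W ^ 2) * (n - 1) * (m - 1) * (n - m) := by ring
  have e0 : (n - 1) ^ 2 - (V ^ 2 + n ^ 2 * W ^ 2 + 2 * V * n * W * c) = 0 := by linarith
  rw [e0] at key
  have p1 : 0 ≤ (n - 1) * ((m - 1) ^ 2 - (V ^ 2 + m ^ 2 * W ^ 2 + 2 * V * m * W * c)) :=
    mul_nonneg (by linarith) (by linarith)
  have p2 : 0 ≤ (n - m) * (V ^ 2 + W ^ 2 + 2 * V * W * c) :=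
    mul_nonneg (by linarith) hq1
  have p3 : 0 ≤ (1 - W ^ 2) * (n - 1) * (m - 1) * (n - m) :=
    mul_nonneg (mul_nonneg (mul_nonneg hw.le (by linarith)) (by linarith)) (by linarith)
  have z2 : (n - m) * (V ^ 2 + W ^ 2 + 2 * V * W * c) = 0 := by linarith
  have z3 : (1 - W ^ 2) * (n - 1) * (m - 1) * (n - m) = 0 := by linarith
  have hnm : n - m ≠ 0 := by linarith
  have hn1 : n - 1 ≠ 0 := by linarith
  have y2 : V ^ 2 + W ^ 2 + 2 * V * W * c = 0 := by
    rcases mul_eq_zero.1 z2 with h | h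
    · exact absurd h hnm
    · exact h
  have y3 : m - 1 = 0 := by
    rcases mul_eq_zero.1 z3 with h | h
    · rcases mul_eq_zero.1 h with h | h
      · rcases mul_eq_zero.1 h with h | h
        · exact absurd h hw.ne'
        · exact absurd h hn1
      · exact h
    · exact absurd h hnm
  -- degenerate case: c = -1 and V = W
  have hVW : V = W := by
    have : (V - W) ^ 2 ≤ 0 := by
      nlinarith [mul_nonneg (mul_pos hV0 hW0).le (by linarith [hc.1] : 0 ≤ 1 + c)]
    have := pow_eq_zero_iff (two_ne_zero) |>.1 (le_antisymm this (sq_nonneg _))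
    linarith
  subst hVW
  have hc' : c = -1 := by
    have : V ^ 2 * (1 + c) = 0 := by linarith
    rcases mul_eq_zero.1 this with h | h
    · exact absurd h (by positivity)
    · linarith
  subst hc'
  have : (n - 1) ^ 2 * (1 - V ^ 2) = 0 := by linear_combination h2
  rcases mul_eq_zero.1 this with h | h
  · exact hn1 (pow_eq_zero_iff two_ne_zero |>.1 h)
  · exact hw.ne' h

open Real in
lemma core_max (V W K c₀ : ℝ) (hV0 : 0 < V) (hV1 : V < 1) (hW0 : 0 < W) (hW1 : W < 1)
    (hK : 0 ≤ K)
    (hc1 : -1 ≤ c₀) (hc0 : c₀ < 0)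
    (hle : ∀ c ∈ Set.Icc (-1 : ℝ) 1, mm V W c ≤ K * (1 + V * c))
    (heq : mm V W c₀ = K * (1 + V * c₀)) (β : ℝ) :
    (cos β = 1 → Hmax V W β = K) ∧ (cos β ≠ 1 → K < Hmax V W β) := by
  have hp : ∀ y : ℝ, 0 < 1 + V * cos y := fun y => by nlinarith [neg_one_le_cos y]
  have hx₀ : cos (arccos c₀) = c₀ := cos_arccos hc1 (by linarith)
  set x₀ := arccos c₀
  have hbdd : BddAbove (Set.range fun x => Hfun V W x β) := by
    refine ⟨K * (1 + V) / (1 - V), ?_⟩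
    rintro _ ⟨x, rfl⟩
    simp only [Hfun]
    rw [fVWmax_eq_s5 V W x hV0 hW0 hW1]
    apply div_le_div₀
    · exact mul_nonneg hK (by linarith)
    · refine (hle _ ⟨neg_one_le_cos x, cos_le_one x⟩).trans ?_
      apply mul_le_mul_of_nonneg_left _ hK
      nlinarith [cos_le_one x]
    · linarith
    · nlinarith [neg_one_le_cos (x + β)]
  constructor
  · intro hβ
    have hsin : sin β = 0 := by
      have := sin_sq_add_cos_sq β
      rw [hβ] at this
      exact pow_eq_zero_iff two_ne_zero |>.1 (by linarith)
    have hH : ∀ x, Hfun V W x β = mm V W (cos x) / (1 + V * cos x) := by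
      intro x
      unfold Hfun
      rw [fVWmax_eq_s5 V W x hV0 hW0 hW1, cos_add, hβ, hsin]
      simp
    apply le_antisymm
    · apply ciSup_le
      intro x
      rw [hH, div_le_iff₀ (hp x)]
      exact hle _ ⟨neg_one_le_cos x, cos_le_one x⟩
    · refine le_trans (le_of_eq ?_) (le_ciSup hbdd x₀)
      simp only [hH]
      rw [eq_div_iff (hp _).ne', hx₀, heq]
  · intro hβ
    have hβ' : cos β < 1 := lt_of_le_of_ne (cos_le_one β) hβ
    have hsum : 2 * c₀ < cos (x₀ - β) + cos (x₀ + β) := by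
      rw [cos_add, cos_sub, hx₀]; nlinarith
    have main : ∃ x, c₀ < cos x ∧ cos (x + β) = c₀ := by
      by_cases h : c₀ < cos (x₀ - β)
      · exact ⟨x₀ - β, h, by simpa using hx₀⟩
      · refine ⟨-x₀ - β, ?_, by simpa using hx₀⟩
        have : cos (-x₀ - β) = cos (x₀ + β) := by rw [← cos_neg]; ring_nf
        rw [this]; linarith
    obtain ⟨x, h1, h2⟩ := main
    refine lt_of_lt_of_le ?_ (le_ciSup hbdd x)
    simp only [Hfun]
    rw [lt_div_iff₀ (hp _), h2, ← heq, fVWmax_eq_s5 V W x hV0 hW0 hW1]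
    exact mm_strictMono V W _ _ hV0 hV1 hW0 hW1 hc1 h1

open Real in
lemma core_min (V W : ℝ) (hV0 : 0 < V) (hV1 : V < 1) (hW0 : 0 < W) (hW1 : W < 1) (β : ℝ) :
    (cos β = 1 → Hmin V W β = 1 / (1 - W)) ∧ (cos β ≠ 1 → Hmin V W β < 1 / (1 - W)) := by
  have hp : ∀ y : ℝ, 0 < 1 + V * cos y := fun y => by nlinarith [neg_one_le_cos y]
  have hw : 0 < 1 - W := by linarith
  have hm1 : mm V W 1 = (1 + V) / (1 - W) := by
    apply mm_eq_of V W 1 _ hV0 hW0 hW1 (by norm_num)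
    · rw [le_div_iff₀ hw]; linarith
    · field_simp; ring
  have hbdd : BddBelow (Set.range fun x => Hfun V W x β) := by
    refine ⟨0, ?_⟩
    rintro _ ⟨x, rfl⟩
    simp only [Hfun]
    rw [fVWmax_eq_s5 V W x hV0 hW0 hW1]
    have := (mm_spec V W (cos x) hV0 hW0 hW1 ⟨neg_one_le_cos x, cos_le_one x⟩).1
    exact div_nonneg (by linarith) (hp _).le
  constructor
  · intro hβ
    have hsin : sin β = 0 := by
      have := sin_sq_add_cos_sq β
      rw [hβ] at this
      exact pow_eq_zero_iff two_ne_zero |>.1 (by linarith)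
    have hH : ∀ x, Hfun V W x β = mm V W (cos x) / (1 + V * cos x) := by
      intro x
      unfold Hfun
      rw [fVWmax_eq_s5 V W x hV0 hW0 hW1, cos_add, hβ, hsin]
      simp
    apply le_antisymm
    · refine (ciInf_le hbdd 0).trans (le_of_eq ?_)
      simp only [hH, cos_zero, hm1]
      field_simp
    · apply le_ciInf
      intro x
      rw [hH, div_le_div_iff₀ hw (hp x)]
      obtain ⟨h1, h2⟩ := mm_spec V W (cos x) hV0 hW0 hW1 ⟨neg_one_le_cos x, cos_le_one x⟩
      set n := mm V W (cos x)
      have h3 : (V * cos x + n * W) ^ 2 ≤ (n - 1) ^ 2 := by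
        nlinarith [cos_sq_le_one x, mul_nonneg (sq_nonneg V) (sub_nonneg.2 (cos_sq_le_one x))]
      have := (le_abs_self _).trans (abs_le_of_sq_le_sq h3 (by linarith))
      linarith
  · intro hβ
    have hβ' : cos β < 1 := lt_of_le_of_ne (cos_le_one β) hβ
    refine (ciInf_le hbdd (-β)).trans_lt ?_
    simp only [Hfun]
    rw [fVWmax_eq_s5 V W _ hV0 hW0 hW1]
    simp only [neg_add_cancel, cos_zero, cos_neg]
    have := mm_strictMono V W _ _ hV0 hV1 hW0 hW1 (neg_one_le_cos β) hβ'
    rw [hm1] at this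
    rw [div_lt_iff₀ (by linarith)]
    refine this.trans_eq ?_
    ring

lemma case_small (V W : ℝ) (hV0 : 0 < V) (hV1 : V < 1) (hW0 : 0 < W) (hW1 : W < 1)
    (hQ : V * (1 + W) / (2 * W) ≤ 1) :
    ∃ c₀ : ℝ, 0 ≤ (1 / (1 - W)) * ((1 - V ^ 2) / (1 - V * (1 + W) / (2 * W) * V)) ∧
    -1 ≤ c₀ ∧ c₀ < 0 ∧
    (∀ c ∈ Set.Icc (-1 : ℝ) 1, mm V W c ≤
      (1 / (1 - W)) * ((1 - V ^ 2) / (1 - V * (1 + W) / (2 * W) * V)) * (1 + V * c)) ∧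
    mm V W c₀ =
      (1 / (1 - W)) * ((1 - V ^ 2) / (1 - V * (1 + W) / (2 * W) * V)) * (1 + V * c₀) := by
  set Q := V * (1 + W) / (2 * W) with hQd
  have hQ0 : 0 < Q := by positivity
  have hQW : 2 * W * Q = V * (1 + W) := by rw [hQd]; field_simp
  have hw : 0 < 1 - W := by linarith
  have hv : 0 < 1 - V ^ 2 := by nlinarith
  have hq : 0 < 1 - Q * V := by nlinarith
  set K := (1 / (1 - W)) * ((1 - V ^ 2) / (1 - Q * V)) with hK
  have hK0 : 0 < K := by positivity
  have hKe : K * ((1 - W) * (1 - Q * V)) = 1 - V ^ 2 := by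
    rw [hK]
    have h1 := hq.ne'
    have h2 := hw.ne'
    have h3 : 1 - V * Q ≠ 0 := by rwa [mul_comm] at h1
    clear_value Q
    field_simp
  clear_value K Q
  have hKe2 : K * ((1 - W) * (2 * W - V ^ 2 * (1 + W))) = 2 * W * (1 - V ^ 2) := by
    linear_combination 2 * W * hKe + K * (1 - W) * V * hQW
  have hr : 0 < 2 * W - V ^ 2 * (1 + W) := by nlinarith
  have hKV : 1 ≤ K * (1 - V) := by
    have hpos : 0 < (1 - W) * (2 * W - V ^ 2 * (1 + W)) := mul_pos hw hr
    by_contra hlt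
    push Not at hlt
    have h1 := mul_lt_mul_of_pos_right hlt hpos
    have h2 : K * (1 - V) * ((1 - W) * (2 * W - V ^ 2 * (1 + W)))
      = (1 - V) * (2 * W * (1 - V ^ 2)) := by rw [← hKe2]; ring
    rw [h2] at h1
    nlinarith [mul_nonneg (sq_nonneg (V - W)) hv.le, sq_nonneg (W - V ^ 2)]
  have hp : ∀ c ∈ Set.Icc (-1 : ℝ) 1, 1 ≤ K * (1 + V * c) := by
    intro c hc
    refine hKV.trans (mul_le_mul_of_nonneg_left ?_ hK0.le)
    nlinarith [hc.1]
  -- the quadratic is a perfect square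
  have hsq : ∀ c : ℝ, (1 - V ^ 2) * ((K * (1 + V * c) - 1) ^ 2 -
      (V ^ 2 + (K * (1 + V * c)) ^ 2 * W ^ 2 + 2 * V * (K * (1 + V * c)) * W * c))
      = (K * (1 - W) * (1 + V * c) - (1 - V ^ 2)) ^ 2 := by
    intro c
    linear_combination (K * (1 + V * c) ^ 2) * hKe2
  refine ⟨-Q, hK0.le, by linarith, by linarith, ?_, ?_⟩
  · intro c hc
    apply mm_le_of V W c _ hV0 hW0 hW1 hc (hp c hc)
    have h1 := hsq c
    by_contra hlt
    push Not at hlt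
    have : (1 - V ^ 2) * ((K * (1 + V * c) - 1) ^ 2 -
      (V ^ 2 + (K * (1 + V * c)) ^ 2 * W ^ 2 + 2 * V * (K * (1 + V * c)) * W * c)) < 0 :=
      mul_neg_of_pos_of_neg hv (by linarith)
    rw [h1] at this
    linarith [sq_nonneg (K * (1 - W) * (1 + V * c) - (1 - V ^ 2))]
  · have hcQ : -Q ∈ Set.Icc (-1 : ℝ) 1 := ⟨by linarith, by linarith⟩
    apply mm_eq_of V W _ _ hV0 hW0 hW1 hcQ (hp _ hcQ)
    have h1 := hsq (-Q)
    have h2 : K * (1 - W) * (1 + V * -Q) - (1 - V ^ 2) = 0 := by linear_combination hKe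
    rw [h2] at h1
    rcases mul_eq_zero.1 (h1.trans (by norm_num)) with h | h
    · exact absurd h hv.ne'
    · linarith

lemma case_large (V W : ℝ) (hV0 : 0 < V) (hV1 : V < 1) (hW0 : 0 < W) (hW1 : W < 1)
    (hQ : 1 < V * (1 + W) / (2 * W)) :
    0 ≤ (1 / (1 + W)) * ((1 + V) / (1 - V)) ∧
    (∀ c ∈ Set.Icc (-1 : ℝ) 1, mm V W c ≤ (1 / (1 + W)) * ((1 + V) / (1 - V)) * (1 + V * c)) ∧
    mm V W (-1) = (1 / (1 + W)) * ((1 + V) / (1 - V)) * (1 + V * (-1)) := by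
  rw [lt_div_iff₀ (by positivity)] at hQ
  have hv : 0 < 1 - V := by linarith
  have hVW : W ≤ V := by nlinarith
  set K := (1 / (1 + W)) * ((1 + V) / (1 - V)) with hK
  have hK0 : 0 < K := by positivity
  have hKe : K * ((1 + W) * (1 - V)) = 1 + V := by rw [hK]; field_simp
  clear_value K
  have hKV : 1 ≤ K * (1 - V) := by
    by_contra hlt
    push Not at hlt
    nlinarith
  have hp : ∀ c ∈ Set.Icc (-1 : ℝ) 1, 1 ≤ K * (1 + V * c) := by
    intro c hc
    refine hKV.trans (mul_le_mul_of_nonneg_left ?_ hK0.le)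
    nlinarith [hc.1]
  have hsq : ∀ c : ℝ, ((K * (1 + V * c) - 1) ^ 2 -
      (V ^ 2 + (K * (1 + V * c)) ^ 2 * W ^ 2 + 2 * V * (K * (1 + V * c)) * W * c))
      = (V * (1 + c)) * ((K ^ 2 * (1 - W ^ 2) - 2 * K * W) * (1 + V * c) - (1 + V)) := by
    intro c
    linear_combination ((1 + V * c) * (K * (1 - W) - 1)) * hKe
  refine ⟨hK0.le, ?_, ?_⟩
  · intro c hc
    apply mm_le_of V W c _ hV0 hW0 hW1 hc (hp c hc)
    have hA : 1 + V ≤ (K ^ 2 * (1 - W ^ 2) - 2 * K * W) * (1 - V) := by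
      have e : (K ^ 2 * (1 - W ^ 2) - 2 * K * W) * (1 - V) =
        K * ((1 - W) * (1 + V) - 2 * W * (1 - V)) := by
        linear_combination K * (1 - W) * hKe
      rw [e, ← hKe]
      apply mul_le_mul_of_nonneg_left _ hK0.le
      nlinarith
    have hA0 : 0 ≤ K ^ 2 * (1 - W ^ 2) - 2 * K * W := by
      by_contra hlt
      push Not at hlt
      nlinarith
    have h1 : 0 ≤ (V * (1 + c)) * ((K ^ 2 * (1 - W ^ 2) - 2 * K * W) * (1 + V * c) - (1 + V)) := by
      apply mul_nonneg (mul_nonneg hV0.le (by linarith [hc.1]))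
      have : (K ^ 2 * (1 - W ^ 2) - 2 * K * W) * (1 - V) ≤
          (K ^ 2 * (1 - W ^ 2) - 2 * K * W) * (1 + V * c) :=
        mul_le_mul_of_nonneg_left (by nlinarith [hc.1]) hA0
      linarith
    linarith [hsq c]
  · have hc : (-1 : ℝ) ∈ Set.Icc (-1 : ℝ) 1 := by norm_num
    apply mm_eq_of V W _ _ hV0 hW0 hW1 hc (hp _ hc)
    have := hsq (-1)
    linarith

/-- For `V₁, W₁ ∈ (0,1)` and `Q₁ = V₁(1+W₁)/(2W₁)`:
`inf_β H^max(β) = (1/(1−W₁))·(1−V₁²)/(1−Q₁V₁)` if `Q₁ ≤ 1`, and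
`= (1/(1+W₁))·(1+V₁)/(1−V₁)` if `Q₁ ≥ 1`, attained at `β` iff `β` is an even
multiple of `π`.  Moreover `sup_β H^min(β) = 1/(1−W₁)`, attained at `β` iff `β`
is an even multiple of `π`. -/
theorem Hmax_inf_Hmin_sup (V₁ W₁ : ℝ)
    (hV : V₁ ∈ Set.Ioo (0 : ℝ) 1) (hW : W₁ ∈ Set.Ioo (0 : ℝ) 1) :
    let Q₁ : ℝ := V₁ * (1 + W₁) / (2 * W₁)
    (⨅ β : ℝ, Hmax V₁ W₁ β) =
      (if Q₁ ≤ 1 then (1 / (1 - W₁)) * ((1 - V₁ ^ 2) / (1 - Q₁ * V₁))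
        else (1 / (1 + W₁)) * ((1 + V₁) / (1 - V₁))) ∧
    (∀ β : ℝ, Hmax V₁ W₁ β =
        (if Q₁ ≤ 1 then (1 / (1 - W₁)) * ((1 - V₁ ^ 2) / (1 - Q₁ * V₁))
          else (1 / (1 + W₁)) * ((1 + V₁) / (1 - V₁))) ↔
      ∃ k : ℤ, β = 2 * k * Real.pi) ∧
    (⨆ β : ℝ, Hmin V₁ W₁ β) = 1 / (1 - W₁) ∧
    (∀ β : ℝ, Hmin V₁ W₁ β = 1 / (1 - W₁) ↔ ∃ k : ℤ, β = 2 * k * Real.pi) := by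
  intro Q₁
  obtain ⟨hV0, hV1⟩ := hV
  obtain ⟨hW0, hW1⟩ := hW
  have hcos : ∀ β : ℝ, Real.cos β = 1 ↔ ∃ k : ℤ, β = 2 * k * Real.pi := by
    intro β
    rw [Real.cos_eq_one_iff]
    constructor
    · rintro ⟨k, hk⟩; exact ⟨k, by rw [← hk]; ring⟩
    · rintro ⟨k, hk⟩; exact ⟨k, by rw [hk]; ring⟩
  set K : ℝ := (if Q₁ ≤ 1 then (1 / (1 - W₁)) * ((1 - V₁ ^ 2) / (1 - Q₁ * V₁))
        else (1 / (1 + W₁)) * ((1 + V₁) / (1 - V₁))) with hK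
  have hmax : ∀ β : ℝ, (Real.cos β = 1 → Hmax V₁ W₁ β = K) ∧
      (Real.cos β ≠ 1 → K < Hmax V₁ W₁ β) := by
    intro β
    by_cases hQ : Q₁ ≤ 1
    · obtain ⟨c₀, h0, h1, h2, h3, h4⟩ := case_small V₁ W₁ hV0 hV1 hW0 hW1 hQ
      rw [hK, if_pos hQ]
      exact core_max V₁ W₁ _ c₀ hV0 hV1 hW0 hW1 h0 h1 h2 h3 h4 β
    · obtain ⟨h0, h3, h4⟩ := case_large V₁ W₁ hV0 hV1 hW0 hW1 (not_le.1 hQ)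
      rw [hK, if_neg hQ]
      exact core_max V₁ W₁ _ (-1) hV0 hV1 hW0 hW1 h0 le_rfl (by norm_num) h3 h4 β
  have hmin := core_min V₁ W₁ hV0 hV1 hW0 hW1
  have hmaxle : ∀ β, K ≤ Hmax V₁ W₁ β := by
    intro β
    by_cases h : Real.cos β = 1
    · exact ((hmax β).1 h).ge
    · exact ((hmax β).2 h).le
  have hminle : ∀ β, Hmin V₁ W₁ β ≤ 1 / (1 - W₁) := by
    intro β
    by_cases h : Real.cos β = 1
    · exact ((hmin β).1 h).le
    · exact ((hmin β).2 h).le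
  refine ⟨?_, ?_, ?_, ?_⟩
  · apply le_antisymm _ (le_ciInf hmaxle)
    rw [← (hmax 0).1 Real.cos_zero]
    exact ciInf_le ⟨K, by rintro _ ⟨b, rfl⟩; exact hmaxle b⟩ 0
  · intro β
    rw [← hcos]
    refine ⟨fun h => ?_, (hmax β).1⟩
    by_contra hne
    exact ((hmax β).2 hne).ne' h
  · apply le_antisymm (ciSup_le hminle)
    rw [← (hmin 0).1 Real.cos_zero]
    exact le_ciSup (f := fun β => Hmin V₁ W₁ β)
      ⟨1 / (1 - W₁), by rintro _ ⟨b, rfl⟩; exact hminle b⟩ 0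
  · intro β
    rw [← hcos]
    refine ⟨fun h => ?_, (hmin β).1⟩
    by_contra hne
    exact ((hmin β).2 hne).ne h
end

section
/- Let V₁, W₁ ∈ (0,1). Then the function H^max is monotonically increasing on the interval [0, π] and the function H^min is monotonically decreasing on [0, π]. Moreover, for every β ∈ ℝ one has the symmetries H^max(π − β) = H^max(π + β) and H^min(π − β) = H^min(π + β). -/
open Real in
lemma aux_reflect (y b : ℝ) : ∃ z, cos z = cos y ∧ cos (z + b) = cos (y + arccos (cos b)) := by
  have hs : sin (arccos (cos b)) = |sin b| := by
    rw [sin_arccos, ← abs_sin_eq_sqrt_one_sub_cos_sq]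
  have hc : cos (arccos (cos b)) = cos b := cos_arccos (neg_one_le_cos b) (cos_le_one b)
  rcases le_total 0 (sin b) with h | h
  · refine ⟨y, rfl, ?_⟩
    rw [cos_add, cos_add, hs, hc, abs_of_nonneg h]
  · refine ⟨-y, cos_neg y, ?_⟩
    rw [cos_add, cos_add, hs, hc, abs_of_nonpos h, cos_neg, sin_neg]
    ring

open Real in
lemma aux_main {b c : ℝ} (h : cos c ≤ cos b) (x : ℝ) :
    ∃ y, cos x ≤ cos y ∧ cos (y + c) ≤ cos (x + b) := by
  have hs : ∀ t, sin (arccos (cos t)) = |sin t| := fun t => by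
    rw [sin_arccos, ← abs_sin_eq_sqrt_one_sub_cos_sq]
  have hc : ∀ t, cos (arccos (cos t)) = cos t := fun t =>
    cos_arccos (neg_one_le_cos t) (cos_le_one t)
  have hBC : arccos (cos b) ≤ arccos (cos c) := arccos_le_arccos h
  have hx0 := arccos_nonneg (cos x)
  have hxp := arccos_le_pi (cos x)
  have hb0 := arccos_nonneg (cos b)
  rcases le_total (arccos (cos x) + arccos (cos c)) π with hle | hle
  · obtain ⟨z, hz1, hz2⟩ := aux_reflect (arccos (cos x)) c
    refine ⟨z, by rw [hz1, hc], ?_⟩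
    rw [hz2]
    have h1 : cos (arccos (cos x) + arccos (cos c)) ≤ cos (arccos (cos x) + arccos (cos b)) :=
      cos_le_cos_of_nonneg_of_le_pi (by linarith) hle (by linarith)
    refine h1.trans ?_
    rw [cos_add, cos_add, hs, hs, hc, hc, ← abs_mul]
    linarith [le_abs_self (sin x * sin b)]
  · obtain ⟨z, hz1, hz2⟩ := aux_reflect (π - arccos (cos c)) c
    refine ⟨z, ?_, ?_⟩
    · rw [hz1, ← hc x]
      exact cos_le_cos_of_nonneg_of_le_pi (by linarith [arccos_le_pi (cos c)]) hxp (by linarith)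
    · rw [hz2, sub_add_cancel, cos_pi]
      exact neg_one_le_cos _

open Real in
lemma aux_main' {b c : ℝ} (h : cos c ≤ cos b) (x : ℝ) :
    ∃ y, cos y ≤ cos x ∧ cos (x + b) ≤ cos (y + c) := by
  obtain ⟨y, h1, h2⟩ := aux_main h (x + π)
  refine ⟨y + π, ?_, ?_⟩
  · rw [cos_add_pi] at *; linarith
  · rw [add_right_comm, cos_add_pi] at *; linarith

lemma aux_low {V : ℝ} (hV : V ∈ Set.Ioo (0 : ℝ) 1) (t : ℝ) : 1 - V ≤ 1 + V * Real.cos t := by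
  nlinarith [hV.1, Real.neg_one_le_cos t]

lemma aux_low' {V : ℝ} (hV : V ∈ Set.Ioo (0 : ℝ) 1) (t : ℝ) : 1 - V ≤ 1 - V * Real.cos t := by
  nlinarith [hV.1, Real.cos_le_one t]

lemma aux_pos {V : ℝ} (hV : V ∈ Set.Ioo (0 : ℝ) 1) (t : ℝ) : 0 < 1 + V * Real.cos t := by
  linarith [aux_low hV t, hV.2]

lemma aux_pos' {V : ℝ} (hV : V ∈ Set.Ioo (0 : ℝ) 1) (t : ℝ) : 0 < 1 - V * Real.cos t := by
  linarith [aux_low' hV t, hV.2]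

lemma aux_f_le {V W : ℝ} (hV : V ∈ Set.Ioo (0 : ℝ) 1) (hW : W ∈ Set.Ioo (0 : ℝ) 1)
    (a x : ℝ) : fVW V W a x ≤ 2 / (1 - W) := by
  have h1 := hW.2
  unfold fVW
  refine div_le_div₀ (by norm_num) ?_ (by linarith) (aux_low' hW a)
  nlinarith [hV.1, hV.2, Real.cos_le_one (x + a)]

lemma aux_f_bdd {V W : ℝ} (hV : V ∈ Set.Ioo (0 : ℝ) 1) (hW : W ∈ Set.Ioo (0 : ℝ) 1)
    (x : ℝ) : BddAbove (Set.range fun a => fVW V W a x) :=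
  ⟨2 / (1 - W), by rintro _ ⟨a, rfl⟩; exact aux_f_le hV hW a x⟩

lemma aux_g_pos {V W : ℝ} (hV : V ∈ Set.Ioo (0 : ℝ) 1) (hW : W ∈ Set.Ioo (0 : ℝ) 1)
    (x : ℝ) : 0 < fVWmax V W x :=
  (div_pos (aux_pos hV (x + 0)) (aux_pos' hW 0)).trans_le (le_ciSup (aux_f_bdd hV hW x) 0)

lemma aux_g_le {V W : ℝ} (hV : V ∈ Set.Ioo (0 : ℝ) 1) (hW : W ∈ Set.Ioo (0 : ℝ) 1)
    (x : ℝ) : fVWmax V W x ≤ 2 / (1 - W) := ciSup_le fun a => aux_f_le hV hW a x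

lemma aux_g_mono {V W : ℝ} (hV : V ∈ Set.Ioo (0 : ℝ) 1) (hW : W ∈ Set.Ioo (0 : ℝ) 1)
    {x y : ℝ} (h : Real.cos x ≤ Real.cos y) : fVWmax V W x ≤ fVWmax V W y := by
  refine ciSup_le fun a => ?_
  have h' : Real.cos (y + Real.pi) ≤ Real.cos (x + Real.pi) := by
    rw [Real.cos_add_pi, Real.cos_add_pi]; linarith
  obtain ⟨a', h1, h2⟩ := aux_main h' a
  refine le_trans ?_ (le_ciSup (aux_f_bdd hV hW y) a')
  rw [← add_assoc, ← add_assoc, Real.cos_add_pi, Real.cos_add_pi, add_comm a', add_comm a] at h2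
  unfold fVW
  have h3 := hV.1
  have h4 := hW.1
  refine div_le_div₀ (aux_pos hV _).le ?_ (aux_pos' hW _) ?_
  · nlinarith
  · nlinarith

lemma aux_H_mono {V W : ℝ} (hV : V ∈ Set.Ioo (0 : ℝ) 1) (hW : W ∈ Set.Ioo (0 : ℝ) 1)
    {x y b c : ℝ} (h : Real.cos x ≤ Real.cos y)
    (h' : Real.cos (y + c) ≤ Real.cos (x + b)) : Hfun V W x b ≤ Hfun V W y c := by
  have h3 := hV.1
  refine div_le_div₀ (aux_g_pos hV hW y).le (aux_g_mono hV hW h) (aux_pos hV _) ?_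
  nlinarith

lemma aux_Hmax {V W : ℝ} (hV : V ∈ Set.Ioo (0 : ℝ) 1) (hW : W ∈ Set.Ioo (0 : ℝ) 1)
    {b c : ℝ} (h : Real.cos c ≤ Real.cos b) : Hmax V W b ≤ Hmax V W c := by
  refine ciSup_le fun x => ?_
  obtain ⟨y, h1, h2⟩ := aux_main h x
  refine (aux_H_mono hV hW h1 h2).trans (le_ciSup (f := fun x => Hfun V W x c) ?_ y)
  refine ⟨2 / (1 - W) / (1 - V), ?_⟩
  rintro _ ⟨x, rfl⟩
  have := hV.2
  have := hW.2
  exact div_le_div₀ (div_nonneg (by norm_num) (by linarith)) (aux_g_le hV hW x) (by linarith)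
    (aux_low hV _)

lemma aux_Hmin {V W : ℝ} (hV : V ∈ Set.Ioo (0 : ℝ) 1) (hW : W ∈ Set.Ioo (0 : ℝ) 1)
    {b c : ℝ} (h : Real.cos c ≤ Real.cos b) : Hmin V W c ≤ Hmin V W b := by
  refine le_ciInf fun x => ?_
  obtain ⟨y, h1, h2⟩ := aux_main' h x
  refine (ciInf_le (f := fun x => Hfun V W x c) ?_ y).trans (aux_H_mono hV hW h1 h2)
  refine ⟨0, ?_⟩
  rintro _ ⟨x, rfl⟩
  exact (div_pos (aux_g_pos hV hW x) (aux_pos hV _)).le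

/-- For `V₁, W₁ ∈ (0,1)`, `H^max` is monotonically increasing
on `[0, π]` and `H^min` is monotonically decreasing on `[0, π]`; moreover, for
every `β ∈ ℝ`, `H^max(π − β) = H^max(π + β)` and `H^min(π − β) = H^min(π + β)`. -/
theorem Hmax_monotone_Hmin_antitone (V₁ W₁ : ℝ)
    (hV : V₁ ∈ Set.Ioo (0 : ℝ) 1) (hW : W₁ ∈ Set.Ioo (0 : ℝ) 1) :
    MonotoneOn (Hmax V₁ W₁) (Set.Icc 0 Real.pi) ∧
    AntitoneOn (Hmin V₁ W₁) (Set.Icc 0 Real.pi) ∧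
    (∀ β : ℝ, Hmax V₁ W₁ (Real.pi - β) = Hmax V₁ W₁ (Real.pi + β)) ∧
    (∀ β : ℝ, Hmin V₁ W₁ (Real.pi - β) = Hmin V₁ W₁ (Real.pi + β)) := by
  have hs : ∀ β : ℝ, Real.cos (Real.pi - β) = Real.cos (Real.pi + β) := fun β => by
    rw [Real.cos_pi_sub, add_comm, Real.cos_add_pi]
  refine ⟨fun b hb c hc h => ?_, fun b hb c hc h => ?_, fun β => ?_, fun β => ?_⟩
  · exact aux_Hmax hV hW (Real.cos_le_cos_of_nonneg_of_le_pi hb.1 hc.2 h)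
  · exact aux_Hmin hV hW (Real.cos_le_cos_of_nonneg_of_le_pi hb.1 hc.2 h)
  · exact le_antisymm (aux_Hmax hV hW (hs β).ge) (aux_Hmax hV hW (hs β).le)
  · exact le_antisymm (aux_Hmin hV hW (hs β).le) (aux_Hmin hV hW (hs β).ge)
end

section
/- Let V₁, W₁ ∈ (0,1) and Q₁ = V₁(1+W₁)/(2W₁). Then sup_{x∈ℝ} H(x, 0) = (1/(1−W₁))·(1−V₁²)/(1−Q₁V₁) if Q₁ ≤ 1, and sup_{x∈ℝ} H(x, 0) = (1/(1+W₁))·(1+V₁)/(1−V₁) if Q₁ ≥ 1; the supremum is attained at a point x₀ with cos x₀ = −Q₁ when Q₁ ≤ 1, and at x₀ an odd multiple of π when Q₁ ≥ 1. Moreover inf_{x∈ℝ} H(x, 0) = 1/(1−W₁), attained at every multiple of π if V₁ ≤ W₁, and at every even multiple of π if V₁ > W₁. -/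
lemma aux_up (V W K x a : ℝ) (hW : 0 < W) (hW1 : W < 1) 
    (h1 : 1 ≤ K * (1 - W * Real.cos a))
    (h2 : V ^ 2 * (1 + (K * (1 - W * Real.cos a)) ^ 2
      - 2 * (K * (1 - W * Real.cos a)) * Real.cos a) ≤ (K * (1 - W * Real.cos a) - 1) ^ 2) :
    fVW V W a x ≤ K * (1 + V * Real.cos x) := by
  unfold fVW
  have hy := Real.cos_le_one a
  have hd : 0 < 1 - W * Real.cos a := by nlinarith
  rw [div_le_iff₀ hd, Real.cos_add]
  have e1 := Real.sin_sq_add_cos_sq a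
  have e2 := Real.sin_sq_add_cos_sq x
  generalize hL : K * (1 - W * Real.cos a) = L at h1 h2
  have hg : K * (1 + V * Real.cos x) * (1 - W * Real.cos a) = L * (1 + V * Real.cos x) := by
    rw [← hL]; ring
  rw [hg]
  generalize Real.cos a = y at *
  generalize Real.sin a = s at *
  generalize Real.cos x = c at *
  generalize Real.sin x = d at *
  have key : (V * ((y - L) * c - s * d)) ^ 2 ≤ (L - 1) ^ 2 := by
    refine le_trans ?_ h2
    rw [mul_pow]
    refine mul_le_mul_of_nonneg_left ?_ (sq_nonneg V)
    have : 1 + L ^ 2 - 2 * L * y - ((y - L) * c - s * d) ^ 2 = ((y - L) * d + s * c) ^ 2 := by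
      have : 1 + L ^ 2 - 2 * L * y = ((y - L) ^ 2 + s ^ 2) * (d ^ 2 + c ^ 2) := by
        rw [e2]; linear_combination - e1
      rw [this]; ring
    nlinarith [sq_nonneg ((y - L) * d + s * c)]
  have := abs_le_of_sq_le_sq' key (by linarith)
  linarith [this.2]

lemma exists_angle (A B : ℝ) (h : A ^ 2 + B ^ 2 = 1) :
    ∃ a : ℝ, Real.cos a = A ∧ Real.sin a = B := by
  have hn : ‖(⟨A, B⟩ : ℂ)‖ = 1 := by
    rw [Complex.norm_eq_sqrt_sq_add_sq]; simp [h]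
  have h0 : (⟨A, B⟩ : ℂ) ≠ 0 := by
    intro h'; rw [h'] at hn; simp at hn
  refine ⟨Complex.arg ⟨A, B⟩, ?_, ?_⟩
  · rw [Complex.cos_arg h0, hn]; simp
  · rw [Complex.sin_arg, hn]; simp

lemma max_eq (V W x M : ℝ) (hub : ∀ a, fVW V W a x ≤ M) (hex : ∃ a, fVW V W a x = M) :
    fVWmax V W x = M := by
  obtain ⟨a, ha⟩ := hex
  apply le_antisymm (ciSup_le hub)
  rw [← ha]
  exact le_ciSup (f := fun a => fVW V W a x) ⟨M, by rintro _ ⟨b, rfl⟩; exact hub b⟩ a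

lemma den_pos (V x : ℝ) (hV : 0 < V) (hV1 : V < 1) : 0 < 1 + V * Real.cos x := by
  nlinarith [Real.neg_one_le_cos x]

lemma H_eq (V W x K : ℝ) (hV : 0 < V) (hV1 : V < 1)
    (hub : ∀ a, fVW V W a x ≤ K * (1 + V * Real.cos x))
    (hex : ∃ a, fVW V W a x = K * (1 + V * Real.cos x)) : Hfun V W x 0 = K := by
  unfold Hfun
  rw [max_eq V W x _ hub hex, add_zero, mul_div_assoc, div_self (den_pos V x hV hV1).ne', mul_one]

lemma H_sup (V W K x₀ : ℝ) (hV : 0 < V) (hV1 : V < 1)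
    (hub : ∀ x a, fVW V W a x ≤ K * (1 + V * Real.cos x))
    (hex : ∃ a, fVW V W a x₀ = K * (1 + V * Real.cos x₀)) :
    (⨆ x : ℝ, Hfun V W x 0) = K ∧ Hfun V W x₀ 0 = K := by
  have h0 := H_eq V W x₀ K hV hV1 (hub x₀) hex
  have hle : ∀ x, Hfun V W x 0 ≤ K := by
    intro x
    unfold Hfun
    rw [add_zero, div_le_iff₀ (den_pos V x hV hV1)]
    exact ciSup_le (hub x)
  refine ⟨le_antisymm (ciSup_le hle) ?_, h0⟩
  rw [← h0]
  refine le_ciSup (f := fun x => Hfun V W x 0) ⟨K, ?_⟩ x₀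
  rintro _ ⟨b, rfl⟩; exact hle b

lemma f_bdd (V W x : ℝ) (hV : 0 < V) (hV1 : V < 1) (hW : 0 < W) (hW1 : W < 1) (a : ℝ) :
    fVW V W a x ≤ (1 + V) / (1 - W) := by
  unfold fVW
  have := Real.cos_le_one a
  have := Real.cos_le_one (x + a)
  apply div_le_div₀ <;> nlinarith

lemma H_lower (V W x : ℝ) (hV : 0 < V) (hV1 : V < 1) (hW : 0 < W) (hW1 : W < 1) :
    1 / (1 - W) ≤ Hfun V W x 0 := by
  unfold Hfun
  rw [add_zero, le_div_iff₀ (den_pos V x hV hV1)]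
  have := le_ciSup (f := fun a => fVW V W a x)
    ⟨(1 + V) / (1 - W), by rintro _ ⟨b, rfl⟩; exact f_bdd V W x hV hV1 hW hW1 b⟩ 0
  refine le_trans (le_of_eq ?_) this
  simp [fVW]; ring

lemma H_even (V W x : ℝ) (hV : 0 < V) (hV1 : V < 1) (hW : 0 < W) (hW1 : W < 1)
    (hc : Real.cos x = 1) : Hfun V W x 0 = 1 / (1 - W) := by
  apply H_eq V W x _ hV hV1
  · intro a
    rw [hc]
    refine (f_bdd V W x hV hV1 hW hW1 a).trans (le_of_eq ?_)
    ring
  · exact ⟨0, by simp [fVW]; ring⟩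

lemma H_odd (V W x : ℝ) (hV : 0 < V) (hV1 : V < 1) (hW : 0 < W) (hW1 : W < 1) (hVW : V ≤ W)
    (hc : Real.cos x = -1) : Hfun V W x 0 = 1 / (1 - W) := by
  apply H_eq V W x _ hV hV1
  · intro a
    have hs : Real.sin x = 0 := by
      have := Real.sin_sq_add_cos_sq x
      rw [hc] at this
      have : Real.sin x ^ 2 = 0 := by linarith
      simpa using this
    have hy := Real.cos_le_one a
    have hd : 0 < 1 - W * Real.cos a := by nlinarith
    have hw : 0 < 1 - W := by linarith
    rw [fVW, Real.cos_add, hc, hs, one_div_mul_eq_div, div_le_div_iff₀ hd hw]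
    nlinarith
  · exact ⟨0, by simp [fVW]; ring⟩

lemma sup_low (V W : ℝ) (hV : 0 < V) (hV1 : V < 1) (hW : 0 < W) (hW1 : W < 1)
    (Q : ℝ) (hQ : Q * (2 * W) = V * (1 + W)) (hQ1 : Q ≤ 1) (x₀ : ℝ) (hc : Real.cos x₀ = -Q) :
    (⨆ x : ℝ, Hfun V W x 0) = (1 / (1 - W)) * ((1 - V ^ 2) / (1 - Q * V)) ∧
    Hfun V W x₀ 0 = (1 / (1 - W)) * ((1 - V ^ 2) / (1 - Q * V)) := by
  have hw : 0 < 1 - W := by linarith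
  have hQV : V ≤ Q := by nlinarith
  have hu : 0 < 1 - Q * V := by nlinarith
  have hK : (1 / (1 - W)) * ((1 - V ^ 2) / (1 - Q * V)) * ((1 - W) * (1 - Q * V)) = 1 - V ^ 2 := by
    rw [div_mul_div_comm, one_mul, div_mul_cancel₀ _ (by positivity)]
  generalize (1 / (1 - W)) * ((1 - V ^ 2) / (1 - Q * V)) = K at *
  have hV2 : 0 < 1 - V ^ 2 := by nlinarith
  have hKpos : 0 < K := by
    by_contra hn
    have : 0 < (1 - W) * (1 - Q * V) := by positivity
    nlinarith
  have hK1 : 1 ≤ K * (1 - W) := by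
    have : (K * (1 - W)) * (1 - Q * V) = 1 - V ^ 2 := by linarith
    by_contra hn
    push Not at hn
    nlinarith
  have hVW : V ^ 2 < W := by
    have h1 : V * (1 + W) ≤ 2 * W := by nlinarith
    have h2 : (V * (1 + W)) ^ 2 ≤ (2 * W) ^ 2 := pow_le_pow_left₀ (by positivity) h1 2
    have h3 : 4 * W < (1 + W) ^ 2 := by nlinarith [sq_pos_of_pos hw]
    by_contra hn
    push Not at hn
    have h4 : W * (1 + W) ^ 2 ≤ V ^ 2 * (1 + W) ^ 2 := by gcongr
    nlinarith
  apply H_sup V W K x₀ hV hV1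
  · intro x a
    have hy := Real.cos_le_one a
    apply aux_up V W K x a hW hW1
    · nlinarith [mul_pos hKpos hW]
    · generalize Real.cos a = y at *
      -- multiply by W * (1-V^2)
      have hKK : K * ((1 - W) * (2 * W - V ^ 2 * (1 + W))) = 2 * W * (1 - V ^ 2) := by
        linear_combination 2 * W * hK + K * (1 - W) * V * hQ
      have : W * (1 - V ^ 2) * ((K * (1 - W * y) - 1) ^ 2 - V ^ 2 * (1 + (K * (1 - W * y)) ^ 2
          - 2 * (K * (1 - W * y)) * y)) * W
          = (K * (W - V ^ 2) * (1 - W * y) - (1 - V ^ 2) * W) ^ 2 := by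
        linear_combination (K * V ^ 2 * (1 - W * y) ^ 2) * hKK
      have hp : 0 < W * (1 - V ^ 2) * W := by positivity
      by_contra hn
      push Not at hn
      nlinarith [sq_nonneg (K * (W - V ^ 2) * (1 - W * y) - (1 - V ^ 2) * W)]
  · rw [hc]
    have hM : K * (1 + V * -Q) = (1 - V ^ 2) / (1 - W) := by
      field_simp; linarith
    rw [hM]
    have hs := Real.sin_sq_add_cos_sq x₀
    rw [hc] at hs
    have hD : 0 < W - V ^ 2 := by linarith
    have hQe : Q = V * (1 + W) / (2 * W) := by field_simp; linarith
    obtain ⟨a, ha, hb⟩ := exists_angle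
      ((-(V * Q) * (1 - W) + (1 - V ^ 2) * W) / (W - V ^ 2))
      (-(V * Real.sin x₀ * (1 - W)) / (W - V ^ 2)) (by
        rw [div_pow, div_pow, ← add_div, div_eq_one_iff_eq (by positivity)]
        have : Real.sin x₀ ^ 2 = 1 - Q ^ 2 := by linarith
        have h2 : (-(V * Real.sin x₀ * (1 - W))) ^ 2 = V ^ 2 * (1 - W) ^ 2 * (1 - Q ^ 2) := by
          rw [← this]; ring
        rw [h2]
        linear_combination (-(V * (1 - W) * (1 - V ^ 2))) * hQ)
    refine ⟨a, ?_⟩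
    have hd : 0 < 1 - W * Real.cos a := by nlinarith [Real.cos_le_one a]
    rw [fVW, div_eq_div_iff hd.ne' hw.ne', Real.cos_add, hc]
    have hs' : Real.sin x₀ ^ 2 = 1 - Q ^ 2 := by linarith
    have ha' : Real.cos a * (W - V ^ 2) = -(V * Q) * (1 - W) + (1 - V ^ 2) * W := by
      rw [ha]; field_simp
    have hb' : Real.sin a * (W - V ^ 2) = -(V * Real.sin x₀ * (1 - W)) := by
      rw [hb]; field_simp
    have := mul_left_cancel₀ (a := W - V ^ 2) (b := (1 + V * (-Q * Real.cos a - Real.sin x₀ * Real.sin a)) * (1 - W)) (c := (1 - V ^ 2) * (1 - W * Real.cos a)) hD.ne' (by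
      linear_combination (-V * Q * (1 - W) + (1 - V ^ 2) * W) * ha' - V * Real.sin x₀ * (1 - W) * hb' + V ^ 2 * (1 - W) ^ 2 * hs' - (V * (1 - W) * (1 - V ^ 2)) * hQ)
    exact this

lemma sup_high (V W : ℝ) (hV : 0 < V) (hV1 : V < 1) (hW : 0 < W) (hW1 : W < 1)
    (hQ : 2 * W ≤ V * (1 + W)) :
    (⨆ x : ℝ, Hfun V W x 0) = (1 / (1 + W)) * ((1 + V) / (1 - V)) ∧
    Hfun V W Real.pi 0 = (1 / (1 + W)) * ((1 + V) / (1 - V)) := by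
  have hv : 0 < 1 - V := by linarith
  have hw : 0 < 1 + W := by linarith
  have hVW : W ≤ V := by nlinarith
  apply H_sup V W _ _ hV hV1
  · intro x a
    have hy := Real.cos_le_one a
    have hy' := Real.neg_one_le_cos a
    apply aux_up V W _ x a hW hW1
    · rw [div_mul_div_comm, one_mul, div_mul_eq_mul_div, le_div_iff₀ (by positivity)]
      nlinarith
    · generalize Real.cos a = y at *
      rw [div_mul_div_comm, one_mul]
      obtain ⟨K, hK⟩ : ∃ K, K = (1 + V) / ((1 + W) * (1 - V)) := ⟨_, rfl⟩
      rw [← hK]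
      have hKpos : 0 < K := by rw [hK]; positivity
      have hKe : K * ((1 + W) * (1 - V)) = 1 + V := by
        rw [hK]; field_simp
      obtain ⟨A, hA⟩ : ∃ A, A = (1 - V ^ 2) * W * K ^ 2 - 2 * K * V ^ 2 := ⟨_, rfl⟩
      have hA1 : W * (1 - V ^ 2) - A * (1 + W) ^ 2
          = 2 * V * (K * (1 + W)) * (V * (1 + W) - 2 * W) := by
        rw [hA, hK]; field_simp; ring
      have hA2 : 0 ≤ W * (1 - V ^ 2) - A * (1 + W) ^ 2 := by
        rw [hA1]
        have : 0 ≤ V * (1 + W) - 2 * W := by linarith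
        positivity
      have hV2 : 0 < W * (1 - V ^ 2) := mul_pos hW (by nlinarith)
      have ht : 0 ≤ 1 - W * y := by nlinarith
      have ht2 : 0 ≤ W * (1 + y) := mul_nonneg hW.le (by linarith)
      have hg : 0 ≤ W * (1 - V ^ 2) - A * (1 - W * y) * (1 + W) := by
        rcases le_total A 0 with h | h
        · have : A * (1 - W * y) * (1 + W) ≤ 0 :=
            mul_nonpos_of_nonpos_of_nonneg (mul_nonpos_of_nonpos_of_nonneg h ht) hw.le
          linarith
        · have : 0 ≤ A * (W * (1 + y)) * (1 + W) := by positivity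
          linarith
      have hfin : ((K * (1 - W * y) - 1) ^ 2 - V ^ 2 * (1 + (K * (1 - W * y)) ^ 2
          - 2 * (K * (1 - W * y)) * y)) * (1 + W)
          = (1 + y) * (W * (1 - V ^ 2) - A * (1 - W * y) * (1 + W)) := by
        rw [hA, hK]; field_simp; ring
      have h3 : 0 ≤ (1 + y) * (W * (1 - V ^ 2) - A * (1 - W * y) * (1 + W)) :=
        mul_nonneg (by linarith) hg
      rw [← hfin] at h3
      linarith [nonneg_of_mul_nonneg_left h3 hw]
  · refine ⟨Real.pi, ?_⟩
    rw [fVW, Real.cos_add]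
    simp
    field_simp
    ring

/-- For `V₁, W₁ ∈ (0,1)` and `Q₁ = V₁(1+W₁)/(2W₁)`:
`sup_x H(x,0) = (1/(1−W₁))·(1−V₁²)/(1−Q₁V₁)` if `Q₁ ≤ 1`, attained at some `x₀`
with `cos x₀ = −Q₁`; `sup_x H(x,0) = (1/(1+W₁))·(1+V₁)/(1−V₁)` if `Q₁ ≥ 1`,
attained at `x₀` an odd multiple of `π`.  Moreover `inf_x H(x,0) = 1/(1−W₁)`,
attained at every multiple of `π` if `V₁ ≤ W₁` and at every even multiple of `π`
if `V₁ > W₁`. -/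
theorem Hfun_zero_sup_inf (V₁ W₁ : ℝ)
    (hV : V₁ ∈ Set.Ioo (0 : ℝ) 1) (hW : W₁ ∈ Set.Ioo (0 : ℝ) 1) :
    let Q₁ : ℝ := V₁ * (1 + W₁) / (2 * W₁)
    (Q₁ ≤ 1 →
      (⨆ x : ℝ, Hfun V₁ W₁ x 0) = (1 / (1 - W₁)) * ((1 - V₁ ^ 2) / (1 - Q₁ * V₁)) ∧
      ∃ x₀ : ℝ, Real.cos x₀ = -Q₁ ∧ Hfun V₁ W₁ x₀ 0 = (⨆ x : ℝ, Hfun V₁ W₁ x 0)) ∧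
    (Q₁ ≥ 1 →
      (⨆ x : ℝ, Hfun V₁ W₁ x 0) = (1 / (1 + W₁)) * ((1 + V₁) / (1 - V₁)) ∧
      ∃ x₀ : ℝ, (∃ k : ℤ, x₀ = (2 * k + 1) * Real.pi) ∧
        Hfun V₁ W₁ x₀ 0 = (⨆ x : ℝ, Hfun V₁ W₁ x 0)) ∧
    (⨅ x : ℝ, Hfun V₁ W₁ x 0) = 1 / (1 - W₁) ∧
    (V₁ ≤ W₁ → ∀ x : ℝ, (∃ k : ℤ, x = k * Real.pi) →
      Hfun V₁ W₁ x 0 = 1 / (1 - W₁)) ∧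
    (V₁ > W₁ → ∀ x : ℝ, (∃ k : ℤ, x = 2 * k * Real.pi) →
      Hfun V₁ W₁ x 0 = 1 / (1 - W₁)) := by
  obtain ⟨hV0, hV1⟩ := hV
  obtain ⟨hW0, hW1⟩ := hW
  intro Q₁
  have hQ : Q₁ * (2 * W₁) = V₁ * (1 + W₁) := by
    simp only [Q₁]; field_simp
  have hQpos : 0 < Q₁ := by simp only [Q₁]; positivity
  clear_value Q₁
  refine ⟨?_, ?_, ?_, ?_, ?_⟩
  · intro h
    have hc : Real.cos (Real.arccos (-Q₁)) = -Q₁ := Real.cos_arccos (by linarith) (by linarith)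
    obtain ⟨h1, h2⟩ := sup_low V₁ W₁ hV0 hV1 hW0 hW1 Q₁ hQ h _ hc
    exact ⟨h1, _, hc, h2.trans h1.symm⟩
  · intro h
    obtain ⟨h1, h2⟩ := sup_high V₁ W₁ hV0 hV1 hW0 hW1 (by nlinarith)
    exact ⟨h1, Real.pi, ⟨0, by simp⟩, h2.trans h1.symm⟩
  · apply le_antisymm
    · rw [← H_even V₁ W₁ 0 hV0 hV1 hW0 hW1 Real.cos_zero]
      refine ciInf_le (f := fun x => Hfun V₁ W₁ x 0) ⟨1 / (1 - W₁), ?_⟩ 0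
      rintro _ ⟨b, rfl⟩
      exact H_lower V₁ W₁ b hV0 hV1 hW0 hW1
    · exact le_ciInf fun x => H_lower V₁ W₁ x hV0 hV1 hW0 hW1
  · rintro h x ⟨k, rfl⟩
    have hs : Real.sin (k * Real.pi) = 0 := Real.sin_int_mul_pi k
    rcases Real.sin_eq_zero_iff_cos_eq.mp hs with h1 | h1
    · exact H_even V₁ W₁ _ hV0 hV1 hW0 hW1 h1
    · exact H_odd V₁ W₁ _ hV0 hV1 hW0 hW1 h h1
  · rintro h x ⟨k, rfl⟩
    apply H_even V₁ W₁ _ hV0 hV1 hW0 hW1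
    rw [show 2 * (k : ℝ) * Real.pi = k * (2 * Real.pi) by ring]
    exact Real.cos_int_mul_two_pi k
end

section
/- Let V₁, W₁ ∈ (0,1), and set L = (V₁² − W₁)/(V₁(1−W₁)), K = W₁(1−V₁²)/(V₁(1−W₁)), and Q₁ = V₁(1+W₁)/(2W₁) (equivalently Q₁ = (K² − L² + 1)/(2K)). Consider the system of equations sin x = L·sin α and sin(x + α) = −K·sin α in (x, α) ∈ ℝ². If Q₁ > 1, then the solution set is exactly { (x, α) : x and α are both integer multiples of π }. If Q₁ ≤ 1 (in which case L < 0), then the solution set is exactly the union of that set with { (x, α) : cos x = −Q₁, cos α = (Q₁ − K)/L, and sign(sin x) = −sign(sin α) }. -/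
theorem aux_forward (L K Q x α : ℝ) (hK : 0 < K) (hQ : 2 * K * Q = K ^ 2 - L ^ 2 + 1)
    (h1 : Real.sin x = L * Real.sin α) (h2 : Real.sin (x + α) = -K * Real.sin α)
    (hs : Real.sin α ≠ 0) : Real.cos x = -Q ∧ L * Real.cos α = Q - K := by
  have h3 : L * Real.cos α + Real.cos x = -K := by
    apply mul_right_cancel₀ hs
    rw [Real.sin_add, h1] at h2
    linarith
  have e1 := Real.sin_sq_add_cos_sq x
  have e2 := Real.sin_sq_add_cos_sq α
  have h4 : Real.cos x = -Q := by
    have h5 : L * Real.cos α = -K - Real.cos x := by linarith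
    have h6 : (L * Real.cos α) ^ 2 = (-K - Real.cos x) ^ 2 := by rw [h5]
    rw [h1] at e1
    have : 2 * K * (Real.cos x + Q) = 0 := by linear_combination -e1 + L ^ 2 * e2 - h6 + hQ
    rcases mul_eq_zero.mp this with h | h <;> linarith
  exact ⟨h4, by linarith⟩

theorem aux_zero (L K x α : ℝ) (h1 : Real.sin x = L * Real.sin α) (hs : Real.sin α = 0) :
    (∃ j : ℤ, x = j * Real.pi) ∧ (∃ k : ℤ, α = k * Real.pi) := by
  rw [hs, mul_zero] at h1
  obtain ⟨j, hj⟩ := Real.sin_eq_zero_iff.mp h1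
  obtain ⟨k, hk⟩ := Real.sin_eq_zero_iff.mp hs
  exact ⟨⟨j, hj.symm⟩, ⟨k, hk.symm⟩⟩

theorem aux_triv (L K x α : ℝ)
    (h : (∃ j : ℤ, x = j * Real.pi) ∧ (∃ k : ℤ, α = k * Real.pi)) :
    Real.sin x = L * Real.sin α ∧ Real.sin (x + α) = -K * Real.sin α := by
  obtain ⟨⟨j, rfl⟩, ⟨k, rfl⟩⟩ := h
  simp [Real.sin_add, Real.sin_int_mul_pi]

theorem aux_back (L K Q x α : ℝ) (hL : L < 0) (hQ : 2 * K * Q = K ^ 2 - L ^ 2 + 1)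
    (h1 : Real.cos x = -Q) (h2 : L * Real.cos α = Q - K)
    (h3 : Real.sign (Real.sin x) = -Real.sign (Real.sin α)) :
    Real.sin x = L * Real.sin α ∧ Real.sin (x + α) = -K * Real.sin α := by
  have h4 : Real.sin x = L * Real.sin α := by
    have e1 := Real.sin_sq_add_cos_sq x
    have e2 := Real.sin_sq_add_cos_sq α
    have h6 : (L * Real.cos α) ^ 2 = (Q - K) ^ 2 := by rw [h2]
    rw [h1] at e1
    have : Real.sin x ^ 2 = (L * Real.sin α) ^ 2 := by
      linear_combination e1 - L ^ 2 * e2 + h6 - hQ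
    rcases sq_eq_sq_iff_eq_or_eq_neg.mp this with h | h
    · exact h
    · rcases lt_trichotomy (Real.sin α) 0 with hs | hs | hs
      · have : Real.sin x < 0 := by nlinarith
        rw [Real.sign_of_neg hs, Real.sign_of_neg this] at h3
        norm_num at h3
      · rw [h, hs]; simp
      · have : 0 < Real.sin x := by nlinarith
        rw [Real.sign_of_pos hs, Real.sign_of_pos this] at h3
        norm_num at h3
  refine ⟨h4, ?_⟩
  rw [Real.sin_add, h4, h1]
  linear_combination Real.sin α * h2

theorem aux_sign (L x α : ℝ) (hL : L < 0) (h1 : Real.sin x = L * Real.sin α) :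
    Real.sign (Real.sin x) = -Real.sign (Real.sin α) := by
  rcases lt_trichotomy (Real.sin α) 0 with hs | hs | hs
  · have : 0 < Real.sin x := by nlinarith
    rw [Real.sign_of_neg hs, Real.sign_of_pos this]; norm_num
  · rw [h1, hs]; simp
  · have : Real.sin x < 0 := by nlinarith
    rw [Real.sign_of_pos hs, Real.sign_of_neg this]

/-- Let `V₁, W₁ ∈ (0,1)`, with
`L = (V₁² − W₁)/(V₁(1−W₁))`, `K = W₁(1−V₁²)/(V₁(1−W₁))`,
`Q₁ = V₁(1+W₁)/(2W₁)` (equivalently `Q₁ = (K² − L² + 1)/(2K)`).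
Consider the system `sin x = L·sin α`, `sin(x+α) = −K·sin α`.
If `Q₁ > 1` the solutions are exactly the pairs with `x` and `α` integer
multiples of `π`.  If `Q₁ ≤ 1` (in which case `L < 0`), the solutions are
exactly those together with the pairs with `cos x = −Q₁`,
`cos α = (Q₁ − K)/L` and `sign(sin x) = −sign(sin α)`. -/
theorem system_solutions (V₁ W₁ : ℝ)
    (hV : V₁ ∈ Set.Ioo (0 : ℝ) 1) (hW : W₁ ∈ Set.Ioo (0 : ℝ) 1) :
    let L : ℝ := (V₁ ^ 2 - W₁) / (V₁ * (1 - W₁))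
    let K : ℝ := W₁ * (1 - V₁ ^ 2) / (V₁ * (1 - W₁))
    let Q₁ : ℝ := V₁ * (1 + W₁) / (2 * W₁)
    Q₁ = (K ^ 2 - L ^ 2 + 1) / (2 * K) ∧
    (Q₁ > 1 → ∀ x α : ℝ,
      (Real.sin x = L * Real.sin α ∧ Real.sin (x + α) = -K * Real.sin α) ↔
        ((∃ j : ℤ, x = j * Real.pi) ∧ (∃ k : ℤ, α = k * Real.pi))) ∧
    (Q₁ ≤ 1 → L < 0 ∧ ∀ x α : ℝ,
      (Real.sin x = L * Real.sin α ∧ Real.sin (x + α) = -K * Real.sin α) ↔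
        (((∃ j : ℤ, x = j * Real.pi) ∧ (∃ k : ℤ, α = k * Real.pi)) ∨
          (Real.cos x = -Q₁ ∧ Real.cos α = (Q₁ - K) / L ∧
            Real.sign (Real.sin x) = -Real.sign (Real.sin α)))) := by
  intro L K Q₁
  obtain ⟨hV0, hV1⟩ := hV
  obtain ⟨hW0, hW1⟩ := hW
  have hW' : 0 < 1 - W₁ := by linarith
  have hV' : 0 < 1 - V₁ ^ 2 := by nlinarith
  have hK : 0 < K := by
    simp only [K]
    positivity
  have hQ : 2 * K * Q₁ = K ^ 2 - L ^ 2 + 1 := by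
    simp only [K, L, Q₁]
    field_simp
    ring
  clear_value K
  refine ⟨?_, ?_, ?_⟩
  · rw [eq_div_iff (by positivity)]
    linarith
  · intro hQ1 x α
    refine ⟨fun ⟨h1, h2⟩ => ?_, aux_triv L K x α⟩
    by_cases hs : Real.sin α = 0
    · exact aux_zero L K x α h1 hs
    · have := (aux_forward L K Q₁ x α hK hQ h1 h2 hs).1
      have := Real.neg_one_le_cos x
      linarith
  · intro hQ1
    have hL : L < 0 := by
      have h : V₁ * (1 + W₁) ≤ 2 * W₁ := by
        have := (div_le_one (by positivity)).mp hQ1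
        exact this
      have h2 : (V₁ * (1 + W₁)) ^ 2 ≤ (2 * W₁) ^ 2 := by gcongr
      have h3 : 0 < W₁ * (1 - W₁) ^ 2 := by positivity
      have h4 : V₁ ^ 2 - W₁ < 0 := by
        by_contra hc
        have h5 : 0 ≤ (V₁ ^ 2 - W₁) * (1 + W₁) ^ 2 :=
          mul_nonneg (not_lt.mp hc) (sq_nonneg _)
        nlinarith
      exact div_neg_of_neg_of_pos h4 (by positivity)
    refine ⟨hL, fun x α => ⟨fun ⟨h1, h2⟩ => ?_, ?_⟩⟩
    · by_cases hs : Real.sin α = 0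
      · exact Or.inl (aux_zero L K x α h1 hs)
      · obtain ⟨h3, h4⟩ := aux_forward L K Q₁ x α hK hQ h1 h2 hs
        refine Or.inr ⟨h3, ?_, aux_sign L x α hL h1⟩
        rw [eq_div_iff hL.ne]
        linarith
    · rintro (h | ⟨h1, h2, h3⟩)
      · exact aux_triv L K x α h
      · rw [eq_div_iff hL.ne] at h2
        exact aux_back L K Q₁ x α hL hQ h1 (by linarith) h3
end

section
/- Let V₁, W₁ ∈ (0,1), and set L = (V₁² − W₁)/(V₁(1−W₁)), K = W₁(1−V₁²)/(V₁(1−W₁)), and Q₁ = V₁(1+W₁)/(2W₁). Then the pairs (x, α) ∈ ℝ² satisfying both sin x = L·sin α and sin(x+α) = −K·sin α and additionally f_{V₁W₁}(α, x) = f^max_{V₁W₁}(x) (i.e. α is a maximum point of f_{V₁W₁}(·, x)) are exactly: (a) x and α both even multiples of π; (b) when V₁ ≤ W₁: x an odd multiple of π and α an even multiple of π; (c) when V₁ ≥ W₁: x an odd multiple of π and α an odd multiple of π; (d) when Q₁ ≤ 1: the pairs with cos x = −Q₁, cos α = (Q₁ − K)/L and sign(sin x) = −sign(sin α). -/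
lemma fVW_max_iff (V W x α : ℝ) (hV : V ∈ Set.Ioo (0 : ℝ) 1) (hW : W ∈ Set.Ioo (0 : ℝ) 1) :
    fVW V W α x = fVWmax V W x ↔
      (V * Real.sin (x + α) + fVW V W α x * W * Real.sin α = 0 ∧ 1 ≤ fVW V W α x) := by
  obtain ⟨hV0, hV1⟩ := hV
  obtain ⟨hW0, hW1⟩ := hW
  have hden : ∀ β : ℝ, 0 < 1 - W * Real.cos β := fun β => by
    nlinarith [Real.cos_le_one β]
  have hbdd : BddAbove (Set.range fun β : ℝ => fVW V W β x) := by
    refine ⟨(1 + V) / (1 - W), ?_⟩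
    rintro _ ⟨β, rfl⟩
    simp only [fVW]
    have h1 : 0 < 1 - W := by linarith
    apply div_le_div₀ (by linarith) _ h1
    · nlinarith [Real.cos_le_one β]
    · nlinarith [Real.cos_le_one (x + β)]
  have hM : 1 + V * Real.cos (x + α) = fVW V W α x * (1 - W * Real.cos α) := by
    unfold fVW
    rw [div_mul_cancel₀ _ (hden α).ne']
  generalize hMdef : fVW V W α x = M at hM ⊢
  have key : ∀ t : ℝ, fVW V W (α + t) x ≤ M ↔
      Real.cos t * (M - 1) - Real.sin t * (V * Real.sin (x + α) + M * W * Real.sin α) ≤ M - 1 := by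
    intro t
    have e : V * Real.cos (x + (α + t)) + M * W * Real.cos (α + t) =
        Real.cos t * (M - 1)
          - Real.sin t * (V * Real.sin (x + α) + M * W * Real.sin α) := by
      rw [← add_assoc, Real.cos_add (x + α) t, Real.cos_add α t]
      linear_combination Real.cos t * hM
    rw [← e]
    unfold fVW
    rw [div_le_iff₀ (hden _)]
    constructor <;> intro h <;> linarith
  constructor
  · intro h
    have hle : ∀ t : ℝ, Real.cos t * (M - 1)
        - Real.sin t * (V * Real.sin (x + α) + M * W * Real.sin α) ≤ M - 1 := by
      intro t
      rw [← key, h]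
      exact le_ciSup hbdd (α + t)
    generalize V * Real.sin (x + α) + M * W * Real.sin α = B at hle
    have hA : 1 ≤ M := by
      have := hle Real.pi
      simp at this
      linarith
    refine ⟨?_, hA⟩
    have hc := Complex.norm_mul_cos_arg (⟨M - 1, -B⟩ : ℂ)
    have hs := Complex.norm_mul_sin_arg (⟨M - 1, -B⟩ : ℂ)
    have ht := hle (Complex.arg (⟨M - 1, -B⟩ : ℂ))
    have hR := norm_nonneg (⟨M - 1, -B⟩ : ℂ)
    generalize Complex.arg (⟨M - 1, -B⟩ : ℂ) = t at *
    generalize ‖(⟨M - 1, -B⟩ : ℂ)‖ = R at *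
    simp only at hc hs
    have h2 : R ^ 2 = (M - 1) ^ 2 + B ^ 2 := by
      linear_combination (-R^2) * Real.sin_sq_add_cos_sq t
        + (R * Real.cos t + (M - 1)) * hc + (R * Real.sin t - B) * hs
    have h3 : R ^ 2 ≤ R * (M - 1) := by
      have := mul_le_mul_of_nonneg_left ht hR
      have e : R * (Real.cos t * (M - 1) - Real.sin t * B) = (M - 1) ^ 2 + B ^ 2 := by
        linear_combination (M - 1) * hc - B * hs
      rw [h2]; linarith
    have h4 : B ^ 2 ≤ 0 := by nlinarith [sq_nonneg (R - (M - 1))]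
    exact pow_eq_zero_iff (two_ne_zero) |>.1 (le_antisymm h4 (sq_nonneg B))
  · rintro ⟨hB, hA⟩
    have hle : ∀ β, fVW V W β x ≤ M := by
      intro β
      have := (key (β - α)).2 (by
        rw [hB]; nlinarith [Real.cos_le_one (β - α)])
      simpa using this
    apply le_antisymm
    · rw [← hMdef]; exact le_ciSup hbdd α
    · exact ciSup_le hle

lemma sin_zero_cases {x : ℝ} (h : Real.sin x = 0) :
    (∃ j : ℤ, x = 2 * j * Real.pi) ∨ (∃ j : ℤ, x = (2 * j + 1) * Real.pi) := by
  obtain ⟨n, hn⟩ := Real.sin_eq_zero_iff.1 h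
  obtain ⟨j, hj⟩ := Int.even_or_odd' n
  rcases hj with hj | hj
  · left; refine ⟨j, ?_⟩; rw [← hn, hj]; push_cast; ring
  · right; refine ⟨j, ?_⟩; rw [← hn, hj]; push_cast; ring

lemma even_vals {x : ℝ} (h : ∃ j : ℤ, x = 2 * j * Real.pi) :
    Real.sin x = 0 ∧ Real.cos x = 1 := by
  obtain ⟨j, rfl⟩ := h
  have e : 2 * (j : ℝ) * Real.pi = j * (2 * Real.pi) := by ring
  have hc : Real.cos (2 * (j : ℝ) * Real.pi) = 1 := by
    rw [e]; exact Real.cos_int_mul_two_pi j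
  refine ⟨?_, hc⟩
  have := Real.sin_sq_add_cos_sq (2 * (j : ℝ) * Real.pi)
  rw [hc] at this
  exact pow_eq_zero_iff (two_ne_zero) |>.1 (by linarith)

lemma odd_vals {x : ℝ} (h : ∃ j : ℤ, x = (2 * j + 1) * Real.pi) :
    Real.sin x = 0 ∧ Real.cos x = -1 := by
  obtain ⟨j, rfl⟩ := h
  have e : (2 * (j : ℝ) + 1) * Real.pi = j * (2 * Real.pi) + Real.pi := by ring
  have hc : Real.cos ((2 * (j : ℝ) + 1) * Real.pi) = -1 := by
    rw [e]; exact Real.cos_int_mul_two_pi_add_pi j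
  refine ⟨?_, hc⟩
  have := Real.sin_sq_add_cos_sq ((2 * (j : ℝ) + 1) * Real.pi)
  rw [hc] at this
  exact pow_eq_zero_iff (two_ne_zero) |>.1 (by linarith)

/-- Let `V₁, W₁ ∈ (0,1)`, `L = (V₁² − W₁)/(V₁(1−W₁))`,
`K = W₁(1−V₁²)/(V₁(1−W₁))`, `Q₁ = V₁(1+W₁)/(2W₁)`.  The pairs `(x, α)`
satisfying `sin x = L·sin α`, `sin(x+α) = −K·sin α` and
`f_{V₁W₁}(α, x) = f^max_{V₁W₁}(x)` (i.e. `α` is a maximum point of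
`f_{V₁W₁}(·, x)`) are exactly:
(a) `x, α` both even multiples of `π`;
(b) for `V₁ ≤ W₁`: `x` an odd multiple of `π`, `α` an even multiple of `π`;
(c) for `V₁ ≥ W₁`: `x` an odd multiple of `π`, `α` an odd multiple of `π`;
(d) for `Q₁ ≤ 1`: `cos x = −Q₁`, `cos α = (Q₁ − K)/L`,
`sign(sin x) = −sign(sin α)`. -/
theorem system_solutions_with_max (V₁ W₁ : ℝ)
    (hV : V₁ ∈ Set.Ioo (0 : ℝ) 1) (hW : W₁ ∈ Set.Ioo (0 : ℝ) 1) :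
    let L : ℝ := (V₁ ^ 2 - W₁) / (V₁ * (1 - W₁))
    let K : ℝ := W₁ * (1 - V₁ ^ 2) / (V₁ * (1 - W₁))
    let Q₁ : ℝ := V₁ * (1 + W₁) / (2 * W₁)
    ∀ x α : ℝ,
      (Real.sin x = L * Real.sin α ∧ Real.sin (x + α) = -K * Real.sin α ∧
        fVW V₁ W₁ α x = fVWmax V₁ W₁ x) ↔
      (((∃ j : ℤ, x = 2 * j * Real.pi) ∧ (∃ k : ℤ, α = 2 * k * Real.pi)) ∨
        (V₁ ≤ W₁ ∧ (∃ j : ℤ, x = (2 * j + 1) * Real.pi) ∧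
          (∃ k : ℤ, α = 2 * k * Real.pi)) ∨
        (V₁ ≥ W₁ ∧ (∃ j : ℤ, x = (2 * j + 1) * Real.pi) ∧
          (∃ k : ℤ, α = (2 * k + 1) * Real.pi)) ∨
        (Q₁ ≤ 1 ∧ Real.cos x = -Q₁ ∧ Real.cos α = (Q₁ - K) / L ∧
          Real.sign (Real.sin x) = -Real.sign (Real.sin α))) := by
  intro L K Q x α
  rw [fVW_max_iff V₁ W₁ x α hV hW]
  obtain ⟨hV0, hV1⟩ := hV
  obtain ⟨hW0, hW1⟩ := hW
  have hd : 0 < V₁ * (1 - W₁) := mul_pos hV0 (by linarith)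
  have hL : L * (V₁ * (1 - W₁)) = V₁ ^ 2 - W₁ := div_mul_cancel₀ _ hd.ne'
  have hK : K * (V₁ * (1 - W₁)) = W₁ * (1 - V₁ ^ 2) := div_mul_cancel₀ _ hd.ne'
  have hQ : Q * (2 * W₁) = V₁ * (1 + W₁) := div_mul_cancel₀ _ (by positivity)
  have hV2 : 0 < 1 - V₁ ^ 2 := by nlinarith
  have hK0 : 0 < K := div_pos (mul_pos hW0 hV2) hd
  have hQK : 2 * Q * K = 1 + K ^ 2 - L ^ 2 := by
    have h1 : 1 - W₁ ≠ 0 := by linarith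
    simp only [L, K, Q]
    field_simp
    ring
  have hden : 0 < 1 - W₁ * Real.cos α := by nlinarith [Real.cos_le_one α]
  have hM : 1 + V₁ * Real.cos (x + α) = fVW V₁ W₁ α x * (1 - W₁ * Real.cos α) := by
    unfold fVW
    rw [div_mul_cancel₀ _ hden.ne']
  generalize fVW V₁ W₁ α x = M at hM ⊢
  clear_value L K Q
  have hxs := Real.sin_sq_add_cos_sq x
  have has := Real.sin_sq_add_cos_sq α
  rw [Real.cos_add] at hM
  rw [Real.sin_add]
  constructor
  · rintro ⟨h1, h2, h3, h4⟩
    by_cases hs : Real.sin α = 0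
    · have hx : Real.sin x = 0 := by rw [h1, hs, mul_zero]
      rw [hx, hs] at hM
      rcases sin_zero_cases hx with ex | ex <;> rcases sin_zero_cases hs with ea | ea
      · exact Or.inl ⟨ex, ea⟩
      · rw [(even_vals ex).2, (odd_vals ea).2] at hM
        nlinarith
      · rw [(odd_vals ex).2, (even_vals ea).2] at hM
        exact Or.inr (Or.inl ⟨by nlinarith, ex, ea⟩)
      · rw [(odd_vals ex).2, (odd_vals ea).2] at hM
        exact Or.inr (Or.inr (Or.inl ⟨by nlinarith, ex, ea⟩))
    · right; right; right
      rw [h2] at h3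
      have hMK : M * W₁ = V₁ * K := by
        apply mul_right_cancel₀ hs
        linear_combination h3
      have hC : L * Real.cos α + Real.cos x = -K := by
        apply mul_right_cancel₀ hs
        rw [h1] at h2
        linear_combination h2
      have hM2 : M * (1 - W₁) = 1 - V₁ ^ 2 := by
        apply mul_left_cancel₀ hW0.ne'
        linear_combination hK + (1 - W₁) * hMK
      have hVW : V₁ ^ 2 ≤ W₁ := by nlinarith
      have hsq : 1 = L ^ 2 + K ^ 2 + 2 * K * L * Real.cos α := by
        have hC' : Real.cos x = -K - L * Real.cos α := by linarith
        rw [h1, hC'] at hxs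
        linear_combination -hxs + L ^ 2 * has
      have hCx : Real.cos x = -Q := by
        apply mul_left_cancel₀ (mul_pos two_pos hK0).ne'
        linear_combination 2 * K * hC + hsq + hQK
      have hL0 : L ≠ 0 := by
        intro h0
        rw [h0] at hL hsq
        have hWV : W₁ = V₁ ^ 2 := by linarith
        rw [hWV] at hK
        have : K = V₁ := by
          have : V₁ * (1 - V₁ ^ 2) ≠ 0 := by positivity
          apply mul_right_cancel₀ this
          linear_combination hK
        rw [this] at hsq
        nlinarith
      have hLneg : L < 0 := by
        rcases lt_or_gt_of_ne hL0 with h | h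
        · exact h
        · have := mul_pos h hd
          linarith
      refine ⟨?_, hCx, ?_, ?_⟩
      · linarith [Real.neg_one_le_cos x]
      · rw [eq_div_iff hL0]; linarith
      · rw [h1]
        rcases lt_or_gt_of_ne hs with h | h
        · rw [Real.sign_of_neg h, Real.sign_of_pos (mul_pos_of_neg_of_neg hLneg h)]; norm_num
        · rw [Real.sign_of_pos h, Real.sign_of_neg (mul_neg_of_neg_of_pos hLneg h)]
  · rintro (⟨ex, ea⟩ | ⟨hle, ex, ea⟩ | ⟨hle, ex, ea⟩ | ⟨hQ1, hCx, hca, hsg⟩)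
    · obtain ⟨e1, e2⟩ := even_vals ex
      obtain ⟨e3, e4⟩ := even_vals ea
      rw [e1, e2, e3, e4] at hM ⊢
      refine ⟨by ring, by ring, by ring, ?_⟩
      by_contra hlt
      have := not_le.1 hlt
      nlinarith only [hM, this, hV0, hV1, hW0, hW1]
    · obtain ⟨e1, e2⟩ := odd_vals ex
      obtain ⟨e3, e4⟩ := even_vals ea
      rw [e1, e2, e3, e4] at hM ⊢
      refine ⟨by ring, by ring, by ring, ?_⟩
      by_contra hlt
      have := not_le.1 hlt
      nlinarith only [hM, this, hV0, hV1, hW0, hW1, hle]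
    · obtain ⟨e1, e2⟩ := odd_vals ex
      obtain ⟨e3, e4⟩ := odd_vals ea
      rw [e1, e2, e3, e4] at hM ⊢
      refine ⟨by ring, by ring, by ring, ?_⟩
      by_contra hlt
      have := not_le.1 hlt
      nlinarith only [hM, this, hV0, hV1, hW0, hW1, hle]
    · have hq : V₁ * (1 + W₁) ≤ 2 * W₁ := by rw [← hQ]; nlinarith
      have hVW : V₁ ^ 2 < W₁ := by
        have a1 : (V₁ * (1 + W₁)) ^ 2 ≤ (2 * W₁) ^ 2 :=
          pow_le_pow_left₀ (by positivity) hq 2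
        have a2 : 0 < W₁ * (1 - W₁) ^ 2 := mul_pos hW0 (pow_pos (by linarith) 2)
        have a3 : V₁ ^ 2 * (1 + W₁) ^ 2 < W₁ * (1 + W₁) ^ 2 := by nlinarith
        exact lt_of_mul_lt_mul_right a3 (by positivity)
      have hLneg : L < 0 := by
        by_contra h
        have := mul_nonneg (not_lt.1 h) hd.le
        linarith
      have hca' : Real.cos α * L = Q - K := by rw [hca, div_mul_cancel₀ _ hLneg.ne]
      have hsq : Real.sin x ^ 2 = (L * Real.sin α) ^ 2 := by
        rw [hCx] at hxs
        linear_combination hxs - L ^ 2 * has - hQK + (Real.cos α * L + Q - K) * hca'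
      have h1 : Real.sin x = L * Real.sin α := by
        rcases sq_eq_sq_iff_eq_or_eq_neg.1 hsq with h | h
        · exact h
        · rcases lt_trichotomy (Real.sin α) 0 with hs | hs | hs
          · have : Real.sin x < 0 := by
              have := mul_pos_of_neg_of_neg hLneg hs
              linarith
            rw [Real.sign_of_neg hs, Real.sign_of_neg this] at hsg
            norm_num at hsg
          · rw [h, hs]; ring
          · have : 0 < Real.sin x := by
              have := mul_neg_of_neg_of_pos hLneg hs
              linarith
            rw [Real.sign_of_pos hs, Real.sign_of_pos this] at hsg
            norm_num at hsg
      have h2 : Real.sin x * Real.cos α + Real.cos x * Real.sin α = -K * Real.sin α := by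
        rw [h1, hCx]
        linear_combination Real.sin α * hca'
      have hM2 : M * (1 - W₁) = 1 - V₁ ^ 2 := by
        apply mul_right_cancel₀ hden.ne'
        rw [h1, hCx] at hM
        have e : 1 - V₁ * L - V₁ * K * Real.cos α = M * (1 - W₁ * Real.cos α) := by
          linear_combination hM + V₁ * L * has - V₁ * Real.cos α * hca'
        linear_combination (-(1 - W₁)) * e - hL - Real.cos α * hK
      have hMK : M * W₁ = V₁ * K := by
        have : 1 - W₁ ≠ 0 := by linarith
        apply mul_right_cancel₀ this
        linear_combination W₁ * hM2 - hK
      refine ⟨h1, h2, ?_, ?_⟩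
      · rw [h2]; linear_combination Real.sin α * hMK
      · by_contra hlt
        have := not_le.1 hlt
        nlinarith only [hM2, this, hVW, hW1]
end
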